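/- arXiv:1601.08086 — 5 statements merged into one kernel-verified Lean document; each statement's English description precedes it below -/
import Mathlib

section
/- Let K be a field of characteristic p > 0 and λ ∈ K, and let f_λ = x^2 + y^4 + z^4 + λxyz ∈ K[x, y, z]. Then the coefficient of (xyz)^{p−1} in f_λ^{p−1} equals φ(λ) = Σ_{s=0}^{⌊(p−1)/4⌋} ((4s)!/((2s)!·(s!)^2)) · λ^{p−1−4s} (the multinomial coefficients read in K). Moreover, if f_λ has an isolated singularity, then fpt(f_λ) = 1 when φ(λ) ≠ 0 and fpt(f_λ) = 1 − 1/p when φ(λ) = 0. -/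
/-!
Write `f = f_λ`, `q = p^e` and `μ(q) = μ_f(q)`. The coefficient of `(xyz)^{p-1}` in `f^{p-1}` is
computed with the binomial theorem (`coeff_diag_quartic`); the factor `binom(p-1, 4s)` is `1` in `K`.

If `φ(λ) ≠ 0`, the coefficient of `(xyz)^{q-1}` in `f^{q-1}` is a power of `φ(λ)`, by the
factorization `f^{pq-1} = f^{p-1} (f^{q-1})^p`, so `μ(q) = q` for all `q` (`muF_of_coeff_ne_zero`).

If `φ(λ) = 0`, then `f^{p-1} ∈ m^{[p]}` for degree reasons, so `μ(p^e) ≤ p^e - p^{e-1}` for `e ≥ 1`.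
For the other inequality, the isolated singularity forces `2 ≠ 0` and `λ⁴ ≠ 64`, and then the
Jacobian ideal contains all monomials of weighted degree at least `5` (`monomial_mem_jacobian`).
Differentiating `f^{μ(q)} ∈ m^{[q]}` yields the dichotomy: either `p ∣ μ(q)`, in which case
`μ(q) = p μ(q/p)` (`muF_mul_char_of_dvd`), or `μ(q) ≥ q - 1` (`muF_ge_of_not_dvd`).
Since `0 < μ(p) ≤ p - 1`, the second alternative gives `μ(p) = p - 1`; for `e ≥ 2` the upper bound
excludes the second alternative, and `μ(p^e) = p^e - p^{e-1}` follows by induction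
(`muF_of_coeff_eq_zero`).
-/

open MvPolynomial Filter Topology

/-- The Frobenius power `m^{[q]}` of the maximal ideal `m = (x_0, …, x_n)` of
`R = K[x_0, …, x_n]`, i.e. the ideal generated by `x_0^q, …, x_n^q`. -/
noncomputable def frobeniusPower (K : Type*) [Field K] (n q : ℕ) :
    Ideal (MvPolynomial (Fin (n + 1)) K) :=
  Ideal.span (Set.range fun i : Fin (n + 1) => (X i : MvPolynomial (Fin (n + 1)) K) ^ q)

/-- `μ_f(q) = min {k ∈ ℕ : f^k ∈ m^{[q]}}`. -/
noncomputable def muF {K : Type*} [Field K] {n : ℕ}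
    (f : MvPolynomial (Fin (n + 1)) K) (q : ℕ) : ℕ :=
  sInf {k : ℕ | f ^ k ∈ frobeniusPower K n q}

/-- `f` has an isolated singularity: its partial derivatives `∂f/∂x_0, …, ∂f/∂x_n`
form a regular sequence in `R`. -/
def HasIsolatedSingularity {K : Type*} [Field K] {n : ℕ}
    (f : MvPolynomial (Fin (n + 1)) K) : Prop :=
  RingTheory.Sequence.IsRegular (MvPolynomial (Fin (n + 1)) K)
    ((List.finRange (n + 1)).map fun i => MvPolynomial.pderiv i f)

/-- `fpt(f) = c`: the sequence `μ_f(p^e)/p^e` converges to `c`. -/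
def HasFpt {K : Type*} [Field K] {n : ℕ} (p : ℕ)
    (f : MvPolynomial (Fin (n + 1)) K) (c : ℝ) : Prop :=
  Tendsto (fun e : ℕ => (muF f (p ^ e) : ℝ) / ((p : ℝ) ^ e)) atTop (𝓝 c)

/-! ### Regular sequences and the Jacobian ideal -/

section RegularSequence

/-- Regularity of the `i`-th element of the sequence, phrased with ideals instead of quotient modules. -/
theorem mem_ofList_take_of_mul_mem {A : Type*} [CommRing A] {rs : List A}
    (h : RingTheory.Sequence.IsWeaklyRegular A rs) (i : ℕ) (hi : i < rs.length) {g : A}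
    (hg : rs[i] * g ∈ Ideal.ofList (rs.take i)) : g ∈ Ideal.ofList (rs.take i) := by
  have key := h.regular_mod_prev i hi
  have e : (Ideal.ofList (rs.take i) • ⊤ : Submodule A A) = Ideal.ofList (rs.take i) := by
    simp
  rw [e] at key
  have h0 : rs[i] • (Submodule.Quotient.mk g : A ⧸ Ideal.ofList (rs.take i)) =
      rs[i] • (0 : A ⧸ Ideal.ofList (rs.take i)) := by
    rw [smul_zero, ← Submodule.Quotient.mk_smul, Submodule.Quotient.mk_eq_zero]
    exact hg
  exact (Submodule.Quotient.mk_eq_zero _).1 (key h0)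

/-- If the three partial derivatives of `f_λ` vanish and `2` and `64 - λ⁴` are invertible, then every
monomial of weighted degree at least `5` vanishes: `x` is a multiple of `yz`, so only monomials
in `y, z` matter, and combining `8y³ = λ²yz²` with `8z³ = λ²y²z` kills `y³z` and `yz³`, hence also
`y⁵` and `z⁵`. -/
theorem monomial_eq_zero_of_jacobian {A : Type*} [CommRing A] {x y z L c d : A}
    (hc : 2 * c = 1) (hd : d * (64 - L ^ 4) = 1)
    (h0 : 2 * x + L * (y * z) = 0) (h1 : 4 * y ^ 3 + L * (x * z) = 0)
    (h2 : 4 * z ^ 3 + L * (x * y) = 0) {i j k : ℕ} (h : 5 ≤ 2 * i + j + k) :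
    x ^ i * y ^ j * z ^ k = 0 := by
  have hx : x = -c * L * (y * z) := by linear_combination (-x) * hc + c * h0
  have e1 : 8 * y ^ 3 = L ^ 2 * (y * z ^ 2) := by
    linear_combination 2 * h1 - L * z * h0
  have e2 : 8 * z ^ 3 = L ^ 2 * (y ^ 2 * z) := by
    linear_combination 2 * h2 - L * y * h0
  have a1 : y ^ 3 * z = 0 := by
    linear_combination (-y ^ 3 * z) * hd + d * (8 * z * e1 + L ^ 2 * y * e2)
  have a2 : y * z ^ 3 = 0 := by
    linear_combination (-y * z ^ 3) * hd + d * (8 * y * e2 + L ^ 2 * z * e1)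
  have c8 : c ^ 3 * 8 = 1 := by
    linear_combination (4 * c ^ 2 + 2 * c + 1) * hc
  have a3 : y ^ 5 = 0 := by
    linear_combination (-y ^ 5) * c8 + c ^ 3 * y ^ 2 * e1 + c ^ 3 * L ^ 2 * z * a1
  have a4 : z ^ 5 = 0 := by
    linear_combination (-z ^ 5) * c8 + c ^ 3 * z ^ 2 * e2 + c ^ 3 * L ^ 2 * y * a2
  have key : ∀ m n : ℕ, 5 ≤ m + n → y ^ m * z ^ n = 0 := by
    intro m n hmn
    by_cases hm : 5 ≤ m
    · obtain ⟨t, rfl⟩ := Nat.exists_eq_add_of_le hm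
      rw [pow_add, a3]; ring
    by_cases hn : 5 ≤ n
    · obtain ⟨t, rfl⟩ := Nat.exists_eq_add_of_le hn
      rw [pow_add, a4]; ring
    by_cases hm3 : 3 ≤ m
    · obtain ⟨t, rfl⟩ := Nat.exists_eq_add_of_le hm3
      obtain ⟨u, rfl⟩ := Nat.exists_eq_add_of_le (show 1 ≤ n by omega)
      linear_combination (y ^ t * z ^ u) * a1
    · obtain ⟨t, rfl⟩ := Nat.exists_eq_add_of_le (show 1 ≤ m by omega)
      obtain ⟨u, rfl⟩ := Nat.exists_eq_add_of_le (show 3 ≤ n by omega)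
      linear_combination (y ^ t * z ^ u) * a2
  rw [hx]
  have := key (i + j) (i + k) (by omega)
  calc _ = (-c * L) ^ i * (y ^ (i + j) * z ^ (i + k)) := by ring
    _ = 0 := by rw [this, mul_zero]

end RegularSequence

section Family

variable {K : Type*} [Field K]

/-- The polynomial `f_λ = x² + y⁴ + z⁴ + λxyz`, with `x = X 0`, `y = X 1`, `z = X 2`. -/
noncomputable def quartic (lam : K) : MvPolynomial (Fin 3) K :=
  X 0 ^ 2 + X 1 ^ 4 + X 2 ^ 4 + C lam * (X 0 * X 1 * X 2)

theorem pderiv_zero_quartic (lam : K) :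
    pderiv 0 (quartic lam) = 2 * X 0 + C lam * (X 1 * X 2) := by
  simp [quartic, pderiv_X]
  left; ring

theorem pderiv_one_quartic (lam : K) :
    pderiv 1 (quartic lam) = 4 * X 1 ^ 3 + C lam * (X 0 * X 2) := by
  simp [quartic, pderiv_X]
  left; ring

theorem pderiv_two_quartic (lam : K) :
    pderiv 2 (quartic lam) = 4 * X 2 ^ 3 + C lam * (X 0 * X 1) := by
  simp [quartic, pderiv_X]

theorem isWeaklyRegular_of_isolated {lam : K}
    (h : HasIsolatedSingularity (n := 2) (quartic lam)) :
    RingTheory.Sequence.IsWeaklyRegular (MvPolynomial (Fin 3) K)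
      [(2 * X 0 + C lam * (X 1 * X 2) : MvPolynomial (Fin 3) K), 4 * X 1 ^ 3 + C lam * (X 0 * X 2),
        4 * X 2 ^ 3 + C lam * (X 0 * X 1)] := by
  have hreg := h.toIsWeaklyRegular
  rw [← pderiv_zero_quartic, ← pderiv_one_quartic, ← pderiv_two_quartic]
  exact hreg

/-- In characteristic `2` the derivatives by `x` and `y` are `λyz` and `λxz`; then `y · λxz` lies in
`(λyz)` while `y` does not. -/
theorem two_ne_zero_of_isolated {lam : K}
    (h : HasIsolatedSingularity (n := 2) (quartic lam)) : (2 : K) ≠ 0 := by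
  intro h2
  have h2' : (2 : MvPolynomial (Fin 3) K) = 0 := by
    rw [← map_ofNat (C : K →+* MvPolynomial (Fin 3) K) 2, h2, map_zero]
  have hr := mem_ofList_take_of_mul_mem (isWeaklyRegular_of_isolated h) 1 (by simp) (g := X 1)
  simp only [List.take_succ_cons, List.take_zero, List.getElem_cons_succ,
    List.getElem_cons_zero, Ideal.ofList_singleton, Ideal.mem_span_singleton] at hr
  obtain ⟨c, hc⟩ := hr ⟨X 0, by linear_combination (2 * X 1 ^ 4 - X 0 ^ 2) * h2'⟩
  have := congrArg (MvPolynomial.eval ![(0 : K), 1, 0]) hc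
  simp at this

/-- If `λ⁴ = 64`, then `y · ∂f/∂z` lies in `(∂f/∂x, ∂f/∂y)` while `y` does not. -/
theorem pow_four_ne_of_isolated {lam : K}
    (h : HasIsolatedSingularity (n := 2) (quartic lam)) : (64 : K) - lam ^ 4 ≠ 0 := by
  intro h64
  have hc : 2 * (C (2⁻¹ : K) : MvPolynomial (Fin 3) K) = 1 := by
    rw [← map_ofNat (C : K →+* MvPolynomial (Fin 3) K) 2, ← C_mul,
      mul_inv_cancel₀ (two_ne_zero_of_isolated h), C_1]
  have hL : (64 : MvPolynomial (Fin 3) K) - C lam ^ 4 = 0 := by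
    rw [← map_ofNat (C : K →+* MvPolynomial (Fin 3) K) 64, ← C_pow, ← C_sub, h64, C_0]
  have hr := mem_ofList_take_of_mul_mem (isWeaklyRegular_of_isolated h) 2 (by simp) (g := X 1)
  simp only [List.take_succ_cons, List.take_zero, List.getElem_cons_succ,
    List.getElem_cons_zero, Ideal.ofList_cons, Ideal.ofList_nil, sup_bot_eq, ← Ideal.span_insert,
    Ideal.mem_span_pair] at hr
  generalize C (2⁻¹ : K) = c at hc
  have hccc : c ^ 4 * 16 = 1 := by
    linear_combination (8 * c ^ 3 + 4 * c ^ 2 + 2 * c + 1) * hc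
  -- Modulo `∂f/∂x` one has `x = -λyz/2`, and then `y ∂f/∂z = -(λ²/8) z ∂f/∂y`.
  obtain ⟨a, b, hab⟩ := hr ⟨c * C lam * X 1 ^ 2 + c ^ 4 * C lam ^ 3 * X 2 ^ 2,
    - c ^ 3 * C lam ^ 2 * X 2, by
      linear_combination (C lam * X 0 * X 1 ^ 2 + c ^ 3 * C lam ^ 3 * X 0 * X 2 ^ 2 -
        C lam ^ 2 * X 1 ^ 3 * X 2 * (c * (1 + 2 * c))) * hc - X 1 * X 2 ^ 3 * c ^ 4 * hL +
        4 * X 1 * X 2 ^ 3 * hccc⟩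
  -- Under `x, z ↦ 0` the two generators go to `0` and `4y³`, and `y ∉ (y³)`.
  have := congrArg (MvPolynomial.aeval ![(0 : Polynomial K), Polynomial.X, 0]) hab
  simp at this
  have hdvd : (Polynomial.X : Polynomial K) ^ 3 ∣ Polynomial.X :=
    ⟨4 * MvPolynomial.aeval ![(0 : Polynomial K), Polynomial.X, 0] b,
      this.symm.trans (by ring)⟩
  simpa using Polynomial.X_pow_dvd_iff.1 hdvd 1 (by norm_num)

theorem monomial_mem_jacobian {lam : K}
    (h : HasIsolatedSingularity (n := 2) (quartic lam)) {m : Fin 3 →₀ ℕ}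
    (hm : 5 ≤ 2 * m 0 + m 1 + m 2) :
    monomial m (1 : K) ∈ Ideal.span (Set.range fun i => pderiv i (quartic lam)) := by
  set J := Ideal.span (Set.range fun i => pderiv i (quartic lam)) with hJ
  have hmem : ∀ i, Ideal.Quotient.mk J (pderiv i (quartic lam)) = 0 := fun i =>
    Ideal.Quotient.eq_zero_iff_mem.2 (Ideal.subset_span ⟨i, rfl⟩)
  have h0 := hmem 0
  have h1 := hmem 1
  have h2 := hmem 2
  rw [pderiv_zero_quartic] at h0
  rw [pderiv_one_quartic] at h1
  rw [pderiv_two_quartic] at h2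
  simp only [map_add, map_mul, map_pow, map_ofNat] at h0 h1 h2
  have hc : 2 * Ideal.Quotient.mk J (C (2⁻¹ : K)) = 1 := by
    rw [← map_ofNat ((Ideal.Quotient.mk J).comp C) 2, RingHom.comp_apply, ← map_mul, ← C_mul,
      mul_inv_cancel₀ (two_ne_zero_of_isolated h), C_1, map_one]
  have hd : Ideal.Quotient.mk J (C ((64 - lam ^ 4)⁻¹ : K)) *
      (64 - Ideal.Quotient.mk J (C lam) ^ 4) = 1 := by
    have : (64 - Ideal.Quotient.mk J (C lam) ^ 4) = Ideal.Quotient.mk J (C (64 - lam ^ 4)) := by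
      simp [map_ofNat]
    rw [this, ← map_mul, ← C_mul, inv_mul_cancel₀ (pow_four_ne_of_isolated h), C_1, map_one]
  have := monomial_eq_zero_of_jacobian hc hd h0 h1 h2 hm
  rw [← Ideal.Quotient.eq_zero_iff_mem, monomial_eq, Finsupp.prod_fintype _ _ (by simp),
    Fin.prod_univ_three]
  simpa using this

end Family

/-! ### Frobenius powers of the maximal ideal -/

section Frobenius

variable {K : Type*} [Field K]

/-- `m^{[q]}` is a monomial ideal, so membership is tested on the support. -/
theorem mem_frobeniusPower_iff {n q : ℕ} {g : MvPolynomial (Fin (n + 1)) K} :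
    g ∈ frobeniusPower K n q ↔ ∀ m, coeff m g ≠ 0 → ∃ i, q ≤ m i := by
  have e : frobeniusPower K n q = Ideal.span ((fun s => monomial s (1 : K)) ''
      Set.range fun i : Fin (n + 1) => Finsupp.single i q) := by
    rw [frobeniusPower, ← Set.range_comp]
    simp only [Function.comp_def, X_pow_eq_monomial]
  rw [e, mem_ideal_span_monomial_image]
  simp [mem_support_iff, Finsupp.single_le_iff]

theorem notMem_frobeniusPower {n q : ℕ} {g : MvPolynomial (Fin (n + 1)) K}
    {m : Fin (n + 1) →₀ ℕ} (hm : coeff m g ≠ 0) (h : ∀ i, m i < q) :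
    g ∉ frobeniusPower K n q := fun hg => by
  obtain ⟨i, hi⟩ := mem_frobeniusPower_iff.1 hg m hm
  exact absurd (h i) (not_lt.2 hi)

variable {p : ℕ} [Fact p.Prime] [CharP K p]

theorem coeff_smul_pow_char {σ : Type*} (g : MvPolynomial σ K) (m : σ →₀ ℕ) :
    coeff (p • m) (g ^ p) = coeff m g ^ p := by
  rw [← map_frobenius_expand p, coeff_map, coeff_expand_smul p (Fact.out : p.Prime).ne_zero,
    frobenius_def]

/-- Only `p`-th powers of monomials occur in `g^p`. -/
theorem dvd_of_coeff_pow_char_ne_zero {σ : Type*} {g : MvPolynomial σ K} {m : σ →₀ ℕ}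
    (h : coeff m (g ^ p) ≠ 0) (i : σ) : p ∣ m i := by
  by_contra hi
  rw [← map_frobenius_expand p, coeff_map, coeff_expand_of_not_dvd _ hi, map_zero] at h
  exact h rfl

/-- Frobenius is faithfully flat on `R`; here this is read off from the coefficients of `g^p`. -/
theorem pow_char_mem_iff {n q : ℕ} {g : MvPolynomial (Fin (n + 1)) K} :
    g ^ p ∈ frobeniusPower K n (q * p) ↔ g ∈ frobeniusPower K n q := by
  have hp := (Fact.out : p.Prime).pos
  simp only [mem_frobeniusPower_iff]
  constructor
  · intro h m hm
    obtain ⟨i, hi⟩ := h (p • m) (by rw [coeff_smul_pow_char]; exact pow_ne_zero _ hm)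
    refine ⟨i, ?_⟩
    rw [Finsupp.smul_apply, smul_eq_mul, mul_comm p] at hi
    exact Nat.le_of_mul_le_mul_right hi hp
  · intro h m hm
    choose r hr using dvd_of_coeff_pow_char_ne_zero hm
    have hmr : m = p • Finsupp.equivFunOnFinite.symm r := by
      ext i; simpa using hr i
    rw [hmr, coeff_smul_pow_char] at hm
    obtain ⟨i, hi⟩ := h _ (pow_ne_zero_iff (Fact.out : p.Prime).ne_zero |>.1 hm)
    refine ⟨i, ?_⟩
    rw [hr i, mul_comm p]
    exact Nat.mul_le_mul_right p hi

end Frobenius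

/-! ### The invariant `μ_f(q)` -/

section Mu

variable {K : Type*} [Field K] {n : ℕ} {f : MvPolynomial (Fin (n + 1)) K}

theorem muF_le {q k : ℕ} (h : f ^ k ∈ frobeniusPower K n q) : muF f q ≤ k := Nat.sInf_le h

theorem pow_muF_mem {q k : ℕ} (h : f ^ k ∈ frobeniusPower K n q) :
    f ^ muF f q ∈ frobeniusPower K n q := 
  Nat.sInf_mem (s := {k | f ^ k ∈ frobeniusPower K n q}) ⟨k, h⟩

theorem lt_muF {q k l : ℕ} (h : f ^ k ∉ frobeniusPower K n q)
    (hl : f ^ l ∈ frobeniusPower K n q) : k < muF f q := by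
  by_contra! hk
  exact h (Ideal.pow_mem_of_pow_mem _ (pow_muF_mem hl) hk)

theorem muF_pos {q : ℕ} (hq : 0 < q) {l : ℕ} (hl : f ^ l ∈ frobeniusPower K n q) :
    0 < muF f q :=
  lt_muF (notMem_frobeniusPower (m := 0) (by simp) (by simpa using hq)) hl

/-- If `p` divides `μ_f(pq)`, then `μ_f(pq) = p μ_f(q)`. -/
theorem muF_mul_char_of_dvd {p : ℕ} [Fact p.Prime] [CharP K p] {q l : ℕ}
    (hl : f ^ l ∈ frobeniusPower K n q) (h : p ∣ muF f (q * p)) :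
    muF f (q * p) = muF f q * p := by
  have hup : f ^ (muF f q * p) ∈ frobeniusPower K n (q * p) := by
    rw [pow_mul, pow_char_mem_iff]; exact pow_muF_mem hl
  apply le_antisymm (muF_le hup)
  obtain ⟨k, hk⟩ := h
  have hmem := pow_muF_mem hup
  rw [hk, mul_comm p, pow_mul, pow_char_mem_iff] at hmem
  rw [hk, mul_comm p]
  exact Nat.mul_le_mul_right p (muF_le hmem)

end Mu

/-! ### The values `μ_f(p^e)` for the family -/

section Quartic

variable {K : Type*} [Field K]

/-- Quasi-homogeneity of `f_λ^N` for the weights `2, 1, 1`. -/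
theorem coeff_quartic_pow {lam : K} {N : ℕ} {m : Fin 3 →₀ ℕ}
    (h : coeff m (quartic lam ^ N) ≠ 0) : 2 * m 0 + m 1 + m 2 = 4 * N := by
  have hX := fun i => isWeightedHomogeneous_X K ![2, 1, 1] (i : Fin 3)
  have hf : IsWeightedHomogeneous ![2, 1, 1] (quartic lam) 4 := by
    refine (((hX 0).pow 2).add ((hX 1).pow 4) |>.add ((hX 2).pow 4)).add ?_
    have := (isWeightedHomogeneous_C ![2, 1, 1] lam).mul (((hX 0).mul (hX 1)).mul (hX 2))
    exact this
  have := (hf.pow N) h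
  rw [Finsupp.weight_apply, Finsupp.sum_fintype _ _ (by simp), Fin.sum_univ_three] at this
  simp at this
  omega

theorem quartic_mem (lam : K) {p : ℕ} [Fact p.Prime] [CharP K p] (e : ℕ) :
    quartic lam ^ p ^ e ∈ frobeniusPower K 2 (p ^ e) := by
  induction e with
  | zero =>
    rw [pow_zero, pow_one]
    refine mem_frobeniusPower_iff.2 fun m hm => ?_
    have := coeff_quartic_pow (N := 1) (by rwa [pow_one])
    by_contra! h
    have h0 := h 0
    have h1 := h 1
    have h2 := h 2
    omega
  | succ e ih =>
    rw [pow_succ, pow_mul, pow_char_mem_iff]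
    exact ih

/-- The exponent vector `(N, N, N)` of the monomial `(xyz)^N`. -/
noncomputable def diag (N : ℕ) : Fin 3 →₀ ℕ := Finsupp.equivFunOnFinite.symm fun _ => N

@[simp] theorem diag_apply (N : ℕ) (i : Fin 3) : diag N i = N := rfl

/-- In the product `f^{pq-1} = f^{p-1} · (f^{q-1})^p` only one pair of monomials contributes to
`(xyz)^{pq-1}`: the first factor must have all exponents congruent to `-1` modulo `p`, hence at
least `p - 1`, and its weighted degree is `4(p-1)`. -/
theorem coeff_diag_step {p : ℕ} [Fact p.Prime] [CharP K p] (lam : K) (q : ℕ) (hq : 0 < q) :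
    coeff (diag (q * p - 1)) (quartic lam ^ (q * p - 1)) =
      coeff (diag (p - 1)) (quartic lam ^ (p - 1)) *
        coeff (diag (q - 1)) (quartic lam ^ (q - 1)) ^ p := by
  classical
  have hp := (Fact.out : p.Prime).pos
  obtain ⟨r, rfl⟩ : ∃ r, q = r + 1 := ⟨q - 1, by omega⟩
  have e1 : (r + 1) * p - 1 = (p - 1) + r * p := by
    rw [add_mul, one_mul]; omega
  have hd : diag ((r + 1) * p - 1) = diag (p - 1) + p • diag r := by
    ext i; simp [e1, mul_comm p]
  rw [Nat.add_sub_cancel, ← coeff_smul_pow_char, e1, pow_add, pow_mul, coeff_mul, ← e1]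
  refine Finset.sum_eq_single (diag (p - 1), p • diag r) ?_ ?_
  · rintro ⟨a, b⟩ hab hne
    by_contra hcon
    apply hne
    rw [Finset.HasAntidiagonal.mem_antidiagonal] at hab
    have ha := coeff_quartic_pow (left_ne_zero_of_mul hcon)
    have hb := dvd_of_coeff_pow_char_ne_zero (right_ne_zero_of_mul hcon)
    have hi : ∀ i, p - 1 ≤ a i := by
      intro i
      obtain ⟨t, ht⟩ := hb i
      have hs : a i + b i = p - 1 + r * p := by
        rw [← e1, ← diag_apply ((r + 1) * p - 1) i, ← hab]; rfl
      simp only at ht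
      rw [ht] at hs
      by_contra! hlt
      have htr : r < t := by nlinarith
      have h5 := Nat.mul_le_mul_left p (Nat.succ_le_of_lt htr)
      have h6 : p * r.succ = r * p + p := by rw [Nat.mul_succ, mul_comm]
      omega
    have h0 := hi 0
    have h1 := hi 1
    have h2 := hi 2
    simp only at ha
    have haa : a = diag (p - 1) := by
      ext i
      fin_cases i <;> simp <;> omega
    rw [haa, hd] at hab
    have hbb : b = p • diag r := add_left_cancel hab
    rw [haa, hbb]
  · intro h
    exact absurd (by rw [Finset.HasAntidiagonal.mem_antidiagonal, hd]) h

theorem coeff_diag_ne_zero {p : ℕ} [Fact p.Prime] [CharP K p] {lam : K}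
    (h : coeff (diag (p - 1)) (quartic lam ^ (p - 1)) ≠ 0) (e : ℕ) :
    coeff (diag (p ^ e - 1)) (quartic lam ^ (p ^ e - 1)) ≠ 0 := by
  induction e with
  | zero => simp [show diag 0 = 0 by ext; simp]
  | succ e ih =>
    rw [pow_succ, coeff_diag_step lam _ (pow_pos (Fact.out : p.Prime).pos e)]
    exact mul_ne_zero h (pow_ne_zero _ ih)

/-- The ordinary case: `μ_f(p^e) = p^e`. -/
theorem muF_of_coeff_ne_zero {p : ℕ} [Fact p.Prime] [CharP K p] {lam : K}
    (h : coeff (diag (p - 1)) (quartic lam ^ (p - 1)) ≠ 0) (e : ℕ) :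
    muF (n := 2) (quartic lam) (p ^ e) = p ^ e := by
  have hq := pow_pos (Fact.out : p.Prime).pos e
  have hmem := quartic_mem (p := p) lam e
  apply le_antisymm (muF_le hmem)
  have : p ^ e - 1 < muF (n := 2) (quartic lam) (p ^ e) := by
    refine lt_muF (notMem_frobeniusPower (coeff_diag_ne_zero h e) fun i => ?_) hmem
    change p ^ e - 1 < p ^ e
    omega
  omega

/-- `m^{[q]}` is stable under derivations when `q = 0` in `K`. -/
theorem pderiv_mem_frobeniusPower {n q : ℕ} (hq : (q : K) = 0) (i : Fin (n + 1))
    {g : MvPolynomial (Fin (n + 1)) K} (hg : g ∈ frobeniusPower K n q) :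
    pderiv i g ∈ frobeniusPower K n q := by
  refine Submodule.span_induction ?_ ?_ ?_ ?_ hg
  · rintro _ ⟨j, rfl⟩
    have : (q : MvPolynomial (Fin (n + 1)) K) = 0 := by
      rw [← map_natCast (C : K →+* _), hq, C_0]
    simp [this]
  · simp
  · intro a b _ _ ha hb
    rw [map_add]
    exact add_mem ha hb
  · intro a b hb hb'
    rw [smul_eq_mul, Derivation.leibniz, smul_eq_mul, smul_eq_mul]
    exact add_mem (Ideal.mul_mem_left _ _ hb') (Ideal.mul_mem_right _ _ hb)

/-- Let `k = μ_f(q)`. Differentiating `f^k ∈ m^{[q]}` gives `f^{k-1} J ⊆ m^{[q]}` for the Jacobian ideal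
`J`, provided `p ∤ k`. As `f^{k-1} ∉ m^{[q]}`, some monomial of `f^{k-1}` has all exponents below `q`;
its complement in `(xyz)^{q-1}` has weighted degree `4(q-k)`, and lies outside `J` because the
product is not in `m^{[q]}`. Monomials of weighted degree at least `5` are in `J`, so `q - k ≤ 1`. -/
theorem muF_ge_of_not_dvd {p : ℕ} [Fact p.Prime] [CharP K p] {lam : K}
    (h : HasIsolatedSingularity (n := 2) (quartic lam)) {e : ℕ}
    (hk : ¬ p ∣ muF (n := 2) (quartic lam) (p ^ e)) :
    p ^ e - 1 ≤ muF (n := 2) (quartic lam) (p ^ e) := by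
  by_contra! hlt
  have hq := pow_pos (Fact.out : p.Prime).pos e
  have hmem := pow_muF_mem (quartic_mem (p := p) lam e)
  have hpos := muF_pos (n := 2) hq (quartic_mem (p := p) lam e)
  obtain ⟨k, hk'⟩ : ∃ k, muF (n := 2) (quartic lam) (p ^ e) = k + 1 := ⟨_, (Nat.succ_pred hpos.ne').symm⟩
  have hnot : quartic lam ^ k ∉ frobeniusPower K 2 (p ^ e) := fun hc => by
    have := muF_le hc
    omega
  rw [hk'] at hk hmem hlt
  have hkK : ((k + 1 : ℕ) : K) ≠ 0 := by
    rwa [Ne, CharP.cast_eq_zero_iff K p]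
  have he : e ≠ 0 := by
    rintro rfl
    simp at hlt
  have hqK : ((p ^ e : ℕ) : K) = 0 := by
    rw [Nat.cast_pow, CharP.cast_eq_zero, zero_pow he]
  have hJ : Ideal.span (Set.range fun i => pderiv i (quartic lam)) ≤
      Submodule.comap (LinearMap.mulLeft (MvPolynomial (Fin 3) K) (quartic lam ^ k))
        (frobeniusPower K 2 (p ^ e)) := by
    rw [Ideal.span_le]
    rintro _ ⟨i, rfl⟩
    have hder := pderiv_mem_frobeniusPower hqK i hmem
    rw [Derivation.leibniz_pow, Nat.add_sub_cancel] at hder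
    have := Ideal.mul_mem_left _ (C ((k + 1 : ℕ) : K)⁻¹) hder
    have e2 : C ((k + 1 : ℕ) : K)⁻¹ *
        ((k + 1) • (quartic lam ^ k • pderiv i (quartic lam))) =
        quartic lam ^ k * pderiv i (quartic lam) := by
      rw [nsmul_eq_mul, smul_eq_mul, ← mul_assoc, ← map_natCast (C : K →+* _), ← C_mul,
        inv_mul_cancel₀ hkK, C_1, one_mul]
    rw [e2] at this
    exact this
  rw [mem_frobeniusPower_iff] at hnot
  push Not at hnot
  obtain ⟨m, hm, hlt'⟩ := hnot
  have hw := coeff_quartic_pow hm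
  have h0 := hlt' 0
  have h1 := hlt' 1
  have h2 := hlt' 2
  have hmon := hJ (monomial_mem_jacobian h (m := diag (p ^ e - 1) - m) (by simp; omega))
  refine notMem_frobeniusPower (m := m + (diag (p ^ e - 1) - m)) ?_ ?_ hmon
  · rw [LinearMap.mulLeft_apply, coeff_mul_monomial, mul_one]
    exact hm
  · intro i
    have hi := hlt' i
    have : (diag (p ^ e - 1) - m) i = p ^ e - 1 - m i := rfl
    rw [Finsupp.add_apply, this]
    omega

/-- The supersingular case: `μ_f(p^{e+1}) = p^{e+1} - p^e`. -/
theorem muF_of_coeff_eq_zero {p : ℕ} [Fact p.Prime] [CharP K p] {lam : K}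
    (h : HasIsolatedSingularity (n := 2) (quartic lam))
    (hφ : coeff (diag (p - 1)) (quartic lam ^ (p - 1)) = 0) (e : ℕ) :
    muF (n := 2) (quartic lam) (p ^ (e + 1)) = (p - 1) * p ^ e := by
  have hp := (Fact.out : p.Prime).two_le
  -- The only monomial of weighted degree `4(p-1)` outside `m^{[p]}` is `(xyz)^{p-1}`.
  have hup : ∀ e, quartic lam ^ ((p - 1) * p ^ e) ∈ frobeniusPower K 2 (p ^ (e + 1)) := by
    intro e
    induction e with
    | zero =>
      rw [pow_zero, mul_one, zero_add, pow_one]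
      refine mem_frobeniusPower_iff.2 fun m hm => ?_
      have hw := coeff_quartic_pow hm
      by_contra! hlt
      have h0 := hlt 0
      have h1 := hlt 1
      have h2 := hlt 2
      have : m = diag (p - 1) := by
        ext i
        fin_cases i <;> simp <;> omega
      exact hm (this ▸ hφ)
    | succ e ih =>
      rw [pow_succ p (e + 1), pow_succ p e, ← mul_assoc, pow_mul, pow_char_mem_iff]
      rwa [← pow_succ]
  induction e with
  | zero =>
    have hle := muF_le (hup 0)
    have hpos := muF_pos (n := 2) (by positivity) (hup 0)
    have := muF_ge_of_not_dvd h (e := 0 + 1) (Nat.not_dvd_of_pos_of_lt hpos (by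
      rw [pow_zero] at hle; omega))
    simp at this hle ⊢
    omega
  | succ e ih =>
    have hle := muF_le (hup (e + 1))
    -- Otherwise `p^{e+2} - 1 ≤ μ ≤ p^{e+2} - p^{e+1}`.
    have hdvd : p ∣ muF (n := 2) (quartic lam) (p ^ (e + 1 + 1)) := by
      by_contra hnd
      have hge := muF_ge_of_not_dvd h hnd
      have h3 : 1 < p ^ (e + 1) := Nat.one_lt_pow (by omega) (by omega)
      have h4 : (p - 1) * p ^ (e + 1) + p ^ (e + 1) = p ^ (e + 1 + 1) := by
        rw [pow_succ p (e + 1), ← Nat.succ_mul, Nat.succ_eq_add_one,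
          Nat.sub_add_cancel (by omega), mul_comm]
      omega
    rw [pow_succ p (e + 1)] at hdvd ⊢
    rw [muF_mul_char_of_dvd (hup e) hdvd, ih, pow_succ p e, mul_assoc]

/-! ### The coefficient of `(xyz)^{p-1}` -/

theorem natCast_choose_sub_one {p : ℕ} [Fact p.Prime] [CharP K p] {k : ℕ} (hk : k < p) :
    ((p - 1).choose k : K) = (-1) ^ k := by
  have hp := (Fact.out : p.Prime)
  induction k with
  | zero => simp
  | succ k ih =>
    have h1 : (p.choose (k + 1) : K) = 0 := by
      rw [CharP.cast_eq_zero_iff K p]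
      exact hp.dvd_choose_self (by omega) hk
    have h2 : p.choose (k + 1) = (p - 1).choose k + (p - 1).choose (k + 1) := by
      conv_lhs => rw [← Nat.sub_add_cancel hp.one_le]
      rfl
    rw [h2, Nat.cast_add, ih (by omega)] at h1
    linear_combination h1

/-- The coefficient of `(xyz)^k` in `(x² + y⁴ + z⁴)^k`: the exponents force `k = 4s` and the term
`(x²)^{2s} (y⁴)^s (z⁴)^s`. -/
theorem coeff_diag_fermat (k : ℕ) :
    coeff (diag k) ((X 0 ^ 2 + X 1 ^ 4 + X 2 ^ 4 : MvPolynomial (Fin 3) K) ^ k) =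
      if 4 ∣ k then
        ((k.factorial / ((2 * (k / 4)).factorial * (k / 4).factorial ^ 2) : ℕ) : K) else 0 := by
  classical
  have hexp : (X 0 ^ 2 + X 1 ^ 4 + X 2 ^ 4 : MvPolynomial (Fin 3) K) ^ k =
      ∑ i ∈ Finset.range (k + 1), ∑ j ∈ Finset.range (k - i + 1),
        monomial (Finsupp.single 0 (2 * i) + Finsupp.single 1 (4 * j) +
          Finsupp.single 2 (4 * (k - i - j))) ((k.choose i * (k - i).choose j : ℕ) : K) := by
    rw [add_assoc, add_pow]
    refine Finset.sum_congr rfl fun i _ => ?_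
    rw [add_pow, Finset.mul_sum, Finset.sum_mul]
    refine Finset.sum_congr rfl fun j _ => ?_
    have hC : ∀ m : Fin 3 →₀ ℕ, ∀ a : K, monomial m a = C a * monomial m 1 := by
      intro m a; rw [C_mul_monomial, mul_one]
    rw [hC, ← one_mul (1 : K), ← monomial_mul, ← one_mul (1 : K), ← monomial_mul, one_mul,
      ← X_pow_eq_monomial, ← X_pow_eq_monomial, ← X_pow_eq_monomial]
    simp only [Nat.cast_mul, map_mul, map_natCast]
    ring
  have hco : ∀ i j, i ≤ k → j ≤ k - i → (Finsupp.single 0 (2 * i) + Finsupp.single 1 (4 * j) +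
          Finsupp.single 2 (4 * (k - i - j)) = diag k ↔ 4 ∣ k ∧ i = 2 * (k / 4) ∧ j = k / 4) := by
    intro i j hi hj
    rw [Finsupp.ext_iff]
    simp [Fin.forall_fin_succ, Finsupp.single_apply]
    omega
  rw [hexp, coeff_sum]
  simp only [coeff_sum, coeff_monomial]
  split_ifs with hk
  · obtain ⟨s, rfl⟩ := hk
    have hs : 4 * s / 4 = s := by omega
    rw [Finset.sum_eq_single (2 * s), Finset.sum_eq_single s]
    · rw [if_pos ((hco _ _ (by omega) (by omega)).2 ⟨by simp, by omega, by omega⟩), hs]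
      congr 1
      symm
      apply Nat.div_eq_of_eq_mul_left (by positivity)
      have h1 := Nat.choose_mul_factorial_mul_factorial (show 2 * s ≤ 4 * s by omega)
      have h2 := Nat.choose_mul_factorial_mul_factorial (show s ≤ 2 * s by omega)
      rw [show 4 * s - 2 * s = 2 * s by omega] at *
      rw [show 2 * s - s = s by omega] at h2
      calc (4 * s).factorial
          = (4 * s).choose (2 * s) * (2 * s).factorial *
              ((2 * s).choose s * s.factorial * s.factorial) := by rw [h2, h1]
        _ = _ := by ring
    · intro j hj hne
      rw [Finset.mem_range] at hj
      rw [if_neg]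
      rw [hco _ _ (by omega) (by omega)]
      omega
    · intro h
      exact absurd (Finset.mem_range.2 (by omega)) h
    · intro i hi hne
      rw [Finset.mem_range] at hi
      refine Finset.sum_eq_zero fun j hj => ?_
      rw [Finset.mem_range] at hj
      rw [if_neg]
      rw [hco _ _ (by omega) (by omega)]
      omega
    · intro h
      exact absurd (Finset.mem_range.2 (by omega)) h
  · refine Finset.sum_eq_zero fun i hi => Finset.sum_eq_zero fun j hj => ?_
    rw [Finset.mem_range] at hi hj
    rw [if_neg]
    rw [hco _ _ (by omega) (by omega)]
    tauto

/-- Expanding `((x² + y⁴ + z⁴) + λxyz)^{p-1}` and using that `binom(p-1, 4s) = 1` in `K`. -/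
theorem coeff_diag_quartic {p : ℕ} [Fact p.Prime] [CharP K p] (lam : K) :
    coeff (diag (p - 1)) (quartic lam ^ (p - 1)) =
      ∑ s ∈ Finset.range ((p - 1) / 4 + 1),
        (((4 * s).factorial / ((2 * s).factorial * s.factorial ^ 2) : ℕ) : K) *
          lam ^ (p - 1 - 4 * s) := by
  have hp := (Fact.out : p.Prime).pos
  have hterm : ∀ k ∈ Finset.range (p - 1 + 1), coeff (diag (p - 1))
      ((X 0 ^ 2 + X 1 ^ 4 + X 2 ^ 4 : MvPolynomial (Fin 3) K) ^ k *
        (C lam * (X 0 * X 1 * X 2)) ^ (p - 1 - k) * ((p - 1).choose k : MvPolynomial (Fin 3) K)) =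
      if 4 ∣ k then ((k.factorial / ((2 * (k / 4)).factorial * (k / 4).factorial ^ 2) : ℕ) : K) *
        lam ^ (p - 1 - k) else 0 := by
    intro k hk
    rw [Finset.mem_range] at hk
    have hmon : (X 0 * X 1 * X 2 : MvPolynomial (Fin 3) K) ^ (p - 1 - k) =
        monomial (diag (p - 1 - k)) 1 := by
      rw [monomial_eq, Finsupp.prod_fintype _ _ (by simp), Fin.prod_univ_three]
      simp [mul_pow]
    have hd : diag (p - 1) = diag k + diag (p - 1 - k) := by
      ext i; simp; omega
    have hre : (X 0 ^ 2 + X 1 ^ 4 + X 2 ^ 4 : MvPolynomial (Fin 3) K) ^ k *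
        (C lam * (X 0 * X 1 * X 2)) ^ (p - 1 - k) * ((p - 1).choose k : MvPolynomial (Fin 3) K) =
        C (((p - 1).choose k : K) * lam ^ (p - 1 - k)) *
        ((X 0 ^ 2 + X 1 ^ 4 + X 2 ^ 4) ^ k * monomial (diag (p - 1 - k)) 1) := by
      rw [← hmon, mul_pow (C lam), C_mul, C_pow, map_natCast]; ring
    rw [hre, coeff_C_mul, hd, coeff_mul_monomial, coeff_diag_fermat, mul_one,
      natCast_choose_sub_one (by omega)]
    split_ifs with h4
    · rw [(even_iff_two_dvd.2 (dvd_trans (by norm_num) h4)).neg_one_pow]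
      ring
    · rw [mul_zero]
  rw [quartic, add_pow, coeff_sum, Finset.sum_congr rfl hterm, ← Finset.sum_filter]
  symm
  refine Finset.sum_bij (fun s _ => 4 * s) ?_ ?_ ?_ ?_
  · intro s hs
    simp at hs ⊢
    omega
  · intro a _ b _ h
    simpa using h
  · intro b hb
    simp at hb
    obtain ⟨hb, s, rfl⟩ := hb
    exact ⟨s, by simp; omega, rfl⟩
  · intro s _
    simp

end Quartic

/-- for `f_λ = x² + y⁴ + z⁴ + λxyz`, the coefficient of `(xyz)^{p−1}` in
`f_λ^{p−1}` is `φ(λ) = Σ_{s=0}^{⌊(p−1)/4⌋} ((4s)!/((2s)!(s!)²)) λ^{p−1−4s}`; moreover,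
if `f_λ` has an isolated singularity, then `fpt(f_λ) = 1` when `φ(λ) ≠ 0` and
`fpt(f_λ) = 1 − 1/p` when `φ(λ) = 0`. -/
theorem statement15 {K : Type*} [Field K] {p : ℕ} [Fact p.Prime] [CharP K p]
    (lam : K) (f : MvPolynomial (Fin 3) K)
    (hf : f = X 0 ^ 2 + X 1 ^ 4 + X 2 ^ 4 + C lam * (X 0 * X 1 * X 2))
    (φ : K)
    (hφ : φ = ∑ s ∈ Finset.range ((p - 1) / 4 + 1),
      (((4 * s).factorial / ((2 * s).factorial * s.factorial ^ 2) : ℕ) : K) *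
        lam ^ (p - 1 - 4 * s)) :
    coeff (Finsupp.equivFunOnFinite.symm fun _ : Fin 3 => p - 1) (f ^ (p - 1)) = φ ∧
    (HasIsolatedSingularity (n := 2) f →
      (φ ≠ 0 → HasFpt p f 1) ∧ (φ = 0 → HasFpt p f (1 - 1 / (p : ℝ)))) := by
  obtain rfl : f = quartic lam := hf
  have hco : coeff (diag (p - 1)) (quartic lam ^ (p - 1)) = φ :=
    (coeff_diag_quartic lam).trans hφ.symm
  have hp := (Fact.out : p.Prime)
  have hp0 : (p : ℝ) ≠ 0 := Nat.cast_ne_zero.2 hp.ne_zero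
  refine ⟨hco, fun hiso => ⟨fun h => ?_, fun h => ?_⟩⟩
  · refine tendsto_const_nhds.congr fun e => ?_
    rw [muF_of_coeff_ne_zero (hco ▸ h) e, Nat.cast_pow, div_self (pow_ne_zero _ hp0)]
  · refine (tendsto_add_atTop_iff_nat 1).1 (tendsto_const_nhds.congr fun e => ?_)
    rw [muF_of_coeff_eq_zero hiso (hco.trans h) e, Nat.cast_mul, Nat.cast_pow,
      Nat.cast_sub hp.one_le, pow_succ]
    field_simp
    simp
end

section
/- Let K be a field of characteristic p > 0 and λ ∈ K, and let f_λ = x^2 + y^3 + z^6 + λxyz ∈ K[x, y, z]. Then the coefficient of (xyz)^{p−1} in f_λ^{p−1} equals φ(λ) = Σ_{s=0}^{⌊(p−1)/6⌋} ((6s)!/((3s)!·(2s)!·s!)) · λ^{p−1−6s} (the multinomial coefficients read in K). Moreover, if f_λ has an isolated singularity, then fpt(f_λ) = 1 when φ(λ) ≠ 0 and fpt(f_λ) = 1 − 1/p when φ(λ) = 0. -/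
/-!
Write `f = f_λ`, which is weighted homogeneous of degree `6` for the weights `(3, 2, 1)`.

*The coefficient.* Expanding `((x² + y³ + z⁶) + λxyz)^{p-1}`, only the terms `(x² + y³ + z⁶)^{6s}`
contribute to `(xyz)^{p-1}` (`coeff_pow`), each with an extra factor
`binom (p-1) (6s) = (-1)^{6s} = 1` in `K` (`choose_sub_one`).

*Case `φ ≠ 0`.* For degree reasons `f^{p-1} = φ (xyz)^{p-1}` modulo `m^{[p]}` (`fLam_sub_mem`).
Raising this to the power `p^e` gives `f^{p^e - 1} ∉ m^{[p^e]}` by induction on `e`, so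
`μ_f(p^e) = p^e`.

*Case `φ = 0`.* Now `f^{p-1} ∈ m^{[p]}`, hence `f^{(p-1)p^e} ∈ m^{[p^{e+1}]}`. The isolated
singularity hypothesis forces `p ≥ 5` and `λ⁶ ≠ 432` (`isolated_conditions`), and then every monomial
of weighted degree at least `7` lies in the Jacobian ideal (`monomial_mem_jacobian`). If
`f^{k+1} ∈ m^{[Q]}` with `p ∣ Q` and `p ∤ k + 1`, differentiating shows that the Jacobian ideal
multiplies `f^k` into `m^{[Q]}`, and for `k + 3 ≤ Q` this gives `f^k ∈ m^{[Q]}` (`descent_step`).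
Thus membership of a power of `f` descends to the next lower multiple of `p` in the exponent, from
which flatness of Frobenius (`pow_p_mem_iff`) removes the factor `p`. By induction
`f^{(p-1)p^e - 1} ∉ m^{[p^{e+1}]}`, so `μ_f(p^{e+1}) = (p-1) p^e`.
-/

open MvPolynomial Filter Topology

/-- The exponent vector of the monomial `x^a y^b z^c`. -/
noncomputable def expo (a b c : ℕ) : Fin 3 →₀ ℕ := Finsupp.equivFunOnFinite.symm ![a, b, c]

/-! ### The coefficient of `(xyz)^{p-1}` -/

section General
variable {K : Type*} [Field K]

lemma monomial_expo (a b c : ℕ) (r : K) :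
    monomial (expo a b c) r = C r * (X 0 ^ a * X 1 ^ b * X 2 ^ c) := by
  rw [monomial_eq, Finsupp.prod_fintype _ _ (by simp)]
  simp [Fin.prod_univ_three, expo]

lemma expo_self (d : Fin 3 →₀ ℕ) : expo (d 0) (d 1) (d 2) = d := by
  ext i; fin_cases i <;> rfl

lemma coeff_C_mul_X (a b c n : ℕ) (r : K) :
    coeff (Finsupp.equivFunOnFinite.symm fun _ : Fin 3 => n)
      (C r * (X 0 ^ a * X 1 ^ b * X 2 ^ c)) = if a = n ∧ b = n ∧ c = n then r else 0 := by
  classical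
  rw [← monomial_expo, coeff_monomial]
  congr 1
  simp [funext_iff, Fin.forall_fin_succ, expo]

lemma choose_sub_one (p : ℕ) [Fact p.Prime] [CharP K p] (k : ℕ) (hk : k ≤ p - 1) :
    ((p - 1).choose k : K) = (-1) ^ k := by
  have hp := (Fact.out : p.Prime)
  have hp1 : p - 1 + 1 = p := by have := hp.pos; omega
  induction k with
  | zero => simp
  | succ k ih =>
    have h := Nat.choose_succ_succ' (p - 1) k
    rw [hp1] at h
    have h0 : ((p.choose (k + 1) : ℕ) : K) = 0 :=
      (CharP.cast_eq_zero_iff K p _).2 (hp.dvd_choose_self (by omega) (by omega))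
    rw [h] at h0
    push_cast at h0
    rw [ih (by omega)] at h0
    rw [pow_succ]
    linear_combination h0

lemma choose_mul_choose_six (s : ℕ) :
    (6 * s).choose (5 * s) * (5 * s).choose (3 * s) =
      (6 * s).factorial / ((3 * s).factorial * (2 * s).factorial * s.factorial) := by
  have h1 := Nat.choose_mul_factorial_mul_factorial (show 5 * s ≤ 6 * s by omega)
  have h2 := Nat.choose_mul_factorial_mul_factorial (show 3 * s ≤ 5 * s by omega)
  rw [show 6 * s - 5 * s = s by omega] at h1
  rw [show 5 * s - 3 * s = 2 * s by omega] at h2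
  symm
  apply Nat.div_eq_of_eq_mul_left (by positivity)
  rw [← h1, ← h2]
  ring

/-- The coefficient of `(xyz)^n` in `f_λ^n` for an arbitrary exponent `n`: only the powers
`(x² + y³ + z⁶)^{6s}` of the diagonal part contribute. -/
lemma coeff_pow (lam : K) (n : ℕ) :
    coeff (Finsupp.equivFunOnFinite.symm fun _ : Fin 3 => n)
      ((X 0 ^ 2 + X 1 ^ 3 + X 2 ^ 6 + C lam * (X 0 * X 1 * X 2)) ^ n) =
    ∑ s ∈ Finset.range (n / 6 + 1), ((n.choose (6 * s) : K) *
      (((6 * s).choose (5 * s) * (5 * s).choose (3 * s) : ℕ) : K)) * lam ^ (n - 6 * s) := by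
  have hexp : ((X 0 ^ 2 + X 1 ^ 3 + X 2 ^ 6 + C lam * (X 0 * X 1 * X 2)) ^ n :
      MvPolynomial (Fin 3) K) = ∑ m ∈ Finset.range (n + 1), ∑ k ∈ Finset.range (m + 1),
        ∑ i ∈ Finset.range (k + 1),
        C ((n.choose m : K) * ((m.choose k * k.choose i : ℕ) : K) * lam ^ (n - m)) *
          (X 0 ^ (2 * i + (n - m)) * X 1 ^ (3 * (k - i) + (n - m)) *
            X 2 ^ (6 * (m - k) + (n - m))) := by
    rw [add_pow]
    refine Finset.sum_congr rfl fun m _ => ?_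
    rw [add_pow, Finset.sum_mul, Finset.sum_mul]
    refine Finset.sum_congr rfl fun k _ => ?_
    rw [add_pow, Finset.sum_mul, Finset.sum_mul, Finset.sum_mul, Finset.sum_mul]
    refine Finset.sum_congr rfl fun i _ => ?_
    simp only [map_mul, map_pow, map_natCast, Nat.cast_mul]
    ring
  rw [hexp]
  simp only [coeff_sum, coeff_C_mul_X]
  -- For fixed `m` the exponents match only if `m = 6 s`, `k = 5 s`, `i = 3 s`.
  have hin : ∀ m ∈ Finset.range (n + 1), (∑ k ∈ Finset.range (m + 1),
        ∑ i ∈ Finset.range (k + 1),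
        if 2 * i + (n - m) = n ∧ 3 * (k - i) + (n - m) = n ∧ 6 * (m - k) + (n - m) = n then
        ((n.choose m : K) * ((m.choose k * k.choose i : ℕ) : K) * lam ^ (n - m)) else 0) =
      if 6 ∣ m then ((n.choose m : K) *
        ((m.choose (5 * (m / 6)) * (5 * (m / 6)).choose (3 * (m / 6)) : ℕ) : K)) *
          lam ^ (n - m) else 0 := by
    intro m hm
    rw [Finset.mem_range] at hm
    split_ifs with h6
    · obtain ⟨s, rfl⟩ := h6
      rw [Nat.mul_div_cancel_left s (by norm_num)]
      rw [Finset.sum_eq_single (5 * s), Finset.sum_eq_single (3 * s), if_pos (by omega)]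
      · intro i _ hi
        rw [if_neg (by omega)]
      · intro h
        rw [Finset.mem_range] at h; omega
      · intro k _ hk
        refine Finset.sum_eq_zero fun i _ => ?_
        rw [if_neg (by omega)]
      · intro h
        rw [Finset.mem_range] at h; omega
    · refine Finset.sum_eq_zero fun k _ => Finset.sum_eq_zero fun i _ => ?_
      rw [if_neg (by omega)]
  rw [Finset.sum_congr rfl hin, ← Finset.sum_filter]
  symm
  refine Finset.sum_bij (fun s _ => 6 * s) ?_ ?_ ?_ ?_
  · intro s hs
    simp only [Finset.mem_range, Finset.mem_filter] at hs ⊢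
    omega
  · intro a _ b _ h
    simpa using h
  · intro m hm
    simp only [Finset.mem_range, Finset.mem_filter] at hm
    exact ⟨m / 6, by rw [Finset.mem_range]; omega, by omega⟩
  · intro s _
    rw [Nat.mul_div_cancel_left s (by norm_num)]

lemma coeff_phi {p : ℕ} [Fact p.Prime] [CharP K p] (lam : K) :
    coeff (Finsupp.equivFunOnFinite.symm fun _ : Fin 3 => p - 1)
      ((X 0 ^ 2 + X 1 ^ 3 + X 2 ^ 6 + C lam * (X 0 * X 1 * X 2)) ^ (p - 1)) =
    ∑ s ∈ Finset.range ((p - 1) / 6 + 1),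
      (((6 * s).factorial / ((3 * s).factorial * (2 * s).factorial * s.factorial) : ℕ) : K) *
        lam ^ (p - 1 - 6 * s) := by
  rw [coeff_pow]
  refine Finset.sum_congr rfl fun s hs => ?_
  rw [Finset.mem_range] at hs
  rw [choose_mul_choose_six, choose_sub_one p (6 * s) (by omega), pow_mul]
  norm_num

end General

/-! ### Frobenius powers of the maximal ideal -/

section Frobenius
variable {K : Type*} [Field K] {n : ℕ}

/-- Membership in `m^{[q]}` is a condition on exponents, as for any monomial ideal. -/
lemma mem_frobeniusPower {q : ℕ} {g : MvPolynomial (Fin (n + 1)) K} :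
    g ∈ frobeniusPower K n q ↔ ∀ d, coeff d g ≠ 0 → ∃ i, q ≤ d i := by
  have h := @mem_ideal_span_monomial_image (Fin (n + 1)) K _ g
    (Set.range fun i => Finsupp.single i q)
  rw [← Set.range_comp] at h
  unfold frobeniusPower
  have h2 : (fun i : Fin (n + 1) => (X i : MvPolynomial (Fin (n + 1)) K) ^ q) =
      (fun s => monomial s (1 : K)) ∘ fun i => Finsupp.single i q := by
    funext i
    simp [X_pow_eq_monomial]
  rw [h2, h]
  simp [Finsupp.single_le_iff]

/-- Flatness of Frobenius for the ideals `m^{[q]}`. -/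
lemma pow_p_mem_iff {p : ℕ} [Fact p.Prime] [CharP K p] {q : ℕ}
    {g : MvPolynomial (Fin (n + 1)) K} :
    g ^ p ∈ frobeniusPower K n (p * q) ↔ g ∈ frobeniusPower K n q := by
  classical
  have hp := (Fact.out : p.Prime)
  simp only [mem_frobeniusPower, ← mem_support_iff]
  rw [← map_frobenius_expand p, support_map_of_injective _ (frobenius_inj K p),
    support_expand _ hp.ne_zero]
  simp [hp.pos]

lemma pow_pow_mem_iff {p : ℕ} [Fact p.Prime] [CharP K p] {q : ℕ} (e : ℕ)
    {g : MvPolynomial (Fin (n + 1)) K} :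
    g ^ p ^ e ∈ frobeniusPower K n (p ^ e * q) ↔ g ∈ frobeniusPower K n q := by
  induction e with
  | zero => simp
  | succ e ih => rw [pow_succ, pow_mul, mul_comm _ p, mul_assoc, pow_p_mem_iff, ih]

/-- If `p ∣ q`, then `m^{[q]}` is stable under derivations, since `∂(x_i^q) = 0`. -/
lemma pderiv_mem {p : ℕ} [CharP K p] {q : ℕ} (hq : p ∣ q)
    {g : MvPolynomial (Fin (n + 1)) K} (hg : g ∈ frobeniusPower K n q) (i : Fin (n + 1)) :
    pderiv i g ∈ frobeniusPower K n q := by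
  have hq0 : (q : MvPolynomial (Fin (n + 1)) K) = 0 := by
    rw [← map_natCast (C : K →+* MvPolynomial (Fin (n + 1)) K),
      (CharP.cast_eq_zero_iff K p q).2 hq, map_zero]
  unfold frobeniusPower at hg ⊢
  induction hg using Submodule.span_induction with
  | mem x hx =>
    obtain ⟨j, rfl⟩ := hx
    simp [Derivation.leibniz_pow, hq0]
  | zero => simp
  | add x y _ _ hx hy => rw [map_add]; exact Ideal.add_mem _ hx hy
  | smul a x hx hx' =>
    rw [smul_eq_mul, Derivation.leibniz]
    exact Ideal.add_mem _ (Ideal.mul_mem_left _ _ hx')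
      (by rw [smul_eq_mul, mul_comm]; exact Ideal.mul_mem_left _ _ hx)

lemma muF_eq {f : MvPolynomial (Fin (n + 1)) K} {q N : ℕ}
    (h1 : f ^ (N + 1) ∈ frobeniusPower K n q) (h2 : f ^ N ∉ frobeniusPower K n q) :
    muF f q = N + 1 := by
  unfold muF
  refine le_antisymm (Nat.sInf_le h1) ?_
  by_contra! h
  have hm := Nat.sInf_mem (s := {k : ℕ | f ^ k ∈ frobeniusPower K n q}) ⟨_, h1⟩
  exact h2 (Ideal.pow_mem_of_pow_mem _ hm (by omega))

end Frobenius

/-! ### The family `f_λ` and the case `φ(λ) ≠ 0` -/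

section Family
variable {K : Type*} [Field K]

/-- `f_λ = x² + y³ + z⁶ + λxyz`. -/
noncomputable def fLam (lam : K) : MvPolynomial (Fin 3) K :=
  X 0 ^ 2 + X 1 ^ 3 + X 2 ^ 6 + C lam * (X 0 * X 1 * X 2)

lemma fLam_weighted (lam : K) : IsWeightedHomogeneous ![3, 2, 1] (fLam lam) 6 := by
  have h0 : IsWeightedHomogeneous ![3, 2, 1] (X 0 : MvPolynomial (Fin 3) K) 3 :=
    isWeightedHomogeneous_X K _ 0
  have h1 : IsWeightedHomogeneous ![3, 2, 1] (X 1 : MvPolynomial (Fin 3) K) 2 :=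
    isWeightedHomogeneous_X K _ 1
  have h2 : IsWeightedHomogeneous ![3, 2, 1] (X 2 : MvPolynomial (Fin 3) K) 1 :=
    isWeightedHomogeneous_X K _ 2
  exact (((h0.pow 2).add (h1.pow 3)).add (h2.pow 6)).add (((h0.mul h1).mul h2).C_mul lam)

lemma weight_of_coeff_ne_zero {lam : K} {k : ℕ} {d : Fin 3 →₀ ℕ}
    (h : coeff d (fLam lam ^ k) ≠ 0) : 3 * d 0 + 2 * d 1 + d 2 = 6 * k := by
  have := (fLam_weighted lam).pow k h
  rw [Finsupp.weight_apply, Finsupp.sum_fintype _ _ (by simp)] at this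
  simp [Fin.sum_univ_three] at this
  omega

lemma fLam_mem (lam : K) : fLam lam ∈ frobeniusPower K 2 1 := by
  rw [mem_frobeniusPower]
  intro d hd
  have h := weight_of_coeff_ne_zero (k := 1) (by simpa using hd)
  by_contra! hc
  have h0 := hc 0
  have h1 := hc 1
  have h2 := hc 2
  omega

lemma fLam_pow_mem (p : ℕ) [Fact p.Prime] [CharP K p] (lam : K) (e : ℕ) :
    fLam lam ^ p ^ e ∈ frobeniusPower K 2 (p ^ e) := by
  have h := (pow_pow_mem_iff (p := p) e).2 (fLam_mem lam)
  rwa [mul_one] at h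

/-- For degree reasons, `(xyz)^{p-1}` is the only monomial of `f_λ^{p-1}` that can lie outside
`m^{[p]}`. -/
lemma fLam_sub_mem (p : ℕ) [Fact p.Prime] (lam : K) :
    fLam lam ^ (p - 1) - monomial (expo (p - 1) (p - 1) (p - 1))
      (coeff (Finsupp.equivFunOnFinite.symm fun _ : Fin 3 => p - 1) (fLam lam ^ (p - 1))) ∈
      frobeniusPower K 2 p := by
  classical
  have hp := (Fact.out : p.Prime).pos
  have he : (Finsupp.equivFunOnFinite.symm fun _ : Fin 3 => p - 1) =
      expo (p - 1) (p - 1) (p - 1) := by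
    ext i; fin_cases i <;> rfl
  rw [he, mem_frobeniusPower]
  intro d hd
  by_contra! hc
  have h0 := hc 0
  have h1 := hc 1
  have h2 := hc 2
  rw [coeff_sub, coeff_monomial] at hd
  by_cases hde : expo (p - 1) (p - 1) (p - 1) = d
  · rw [if_pos hde, hde, sub_self] at hd
    exact hd rfl
  · rw [if_neg hde, sub_zero] at hd
    have hw := weight_of_coeff_ne_zero hd
    apply hde
    rw [← expo_self d]
    congr 1 <;> omega

lemma pow_sub_one_notMem (p : ℕ) [Fact p.Prime] [CharP K p] (lam : K)
    (hφ : coeff (Finsupp.equivFunOnFinite.symm fun _ : Fin 3 => p - 1) (fLam lam ^ (p - 1)) ≠ 0)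
    (e : ℕ) : fLam lam ^ (p ^ e - 1) ∉ frobeniusPower K 2 (p ^ e) := by
  have hp := (Fact.out : p.Prime).pos
  induction e with
  | zero =>
    simp only [pow_zero, Nat.sub_self, mem_frobeniusPower]
    intro h
    obtain ⟨i, hi⟩ := h 0 (by simp)
    simp at hi
  | succ e ih =>
    intro hmem
    apply ih
    have hs := (pow_pow_mem_iff (p := p) e).2 (fLam_sub_mem p lam)
    set c := coeff (Finsupp.equivFunOnFinite.symm fun _ : Fin 3 => p - 1) (fLam lam ^ (p - 1))
    rw [← pow_succ, sub_pow_char_pow, monomial_pow] at hs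
    have hexp : p ^ (e + 1) - 1 = (p - 1) * p ^ e + (p ^ e - 1) := by
      have : 0 < p ^ e := by positivity
      obtain ⟨r, rfl⟩ : ∃ r, p = r + 1 := ⟨p - 1, by omega⟩
      rw [pow_succ]
      zify [show 1 ≤ (r + 1) ^ e * (r + 1) by nlinarith, show 1 ≤ (r + 1) ^ e by omega]
      simp
      ring
    rw [hexp, pow_add (fLam lam), pow_mul (fLam lam)] at hmem
    -- Modulo `m^{[p^{e+1}]}`, the power of `f` agrees with `c^{p^e} (xyz)^{(p-1)p^e} f^{p^e-1}`.
    have hm2 := Ideal.sub_mem _ hmem (Ideal.mul_mem_right (fLam lam ^ (p ^ e - 1)) _ hs)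
    rw [← sub_mul, sub_sub_cancel, mem_frobeniusPower] at hm2
    rw [mem_frobeniusPower]
    intro d hd
    obtain ⟨i, hi⟩ := hm2 (p ^ e • expo (p - 1) (p - 1) (p - 1) + d) (by
      rw [coeff_monomial_mul]
      exact mul_ne_zero (pow_ne_zero _ hφ) hd)
    refine ⟨i, ?_⟩
    have hx : expo (p - 1) (p - 1) (p - 1) i = p - 1 := by fin_cases i <;> rfl
    rw [Finsupp.add_apply, Finsupp.smul_apply, hx, smul_eq_mul, pow_succ] at hi
    have : p ^ e * p = p ^ e * (p - 1) + p ^ e := by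
      rw [← Nat.mul_succ]; congr 1; omega
    omega

lemma pderiv0 (lam : K) : pderiv 0 (fLam lam) = C 2 * X 0 + C lam * (X 1 * X 2) := by
  simp only [fLam, map_add, Derivation.leibniz_pow, Derivation.leibniz, pderiv_X, pderiv_C,
    Pi.single_apply, smul_eq_mul, nsmul_eq_mul, map_ofNat]
  simp
  left; ring

lemma pderiv1 (lam : K) : pderiv 1 (fLam lam) = C 3 * X 1 ^ 2 + C lam * (X 0 * X 2) := by
  simp only [fLam, map_add, Derivation.leibniz_pow, Derivation.leibniz, pderiv_X, pderiv_C,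
    Pi.single_apply, smul_eq_mul, nsmul_eq_mul, map_ofNat]
  simp
  left; ring

lemma pderiv2 (lam : K) : pderiv 2 (fLam lam) = C 6 * X 2 ^ 5 + C lam * (X 0 * X 1) := by
  simp only [fLam, map_add, Derivation.leibniz_pow, Derivation.leibniz, pderiv_X, pderiv_C,
    Pi.single_apply, smul_eq_mul, nsmul_eq_mul, map_ofNat]
  simp
  try ring

/-! ### Consequences of the isolated singularity hypothesis -/

/-- Regularity of the last partial derivative modulo the first two, in terms of ideals. -/
lemma mem_of_mul_mem {f : MvPolynomial (Fin 3) K} (h : HasIsolatedSingularity (n := 2) f)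
    (u : MvPolynomial (Fin 3) K)
    (hu : pderiv 2 f * u ∈ Ideal.span {pderiv 0 f, pderiv 1 f}) :
    u ∈ Ideal.span {pderiv 0 f, pderiv 1 f} := by
  have h2 := h.regular_mod_prev 2 (by simp)
  rw [isSMulRegular_quotient_iff_mem_of_smul_mem] at h2
  have hl : (List.take 2 (List.map (fun i => pderiv i f) (List.finRange 3))) =
      [pderiv 0 f, pderiv 1 f] := by
    simp [List.finRange_succ]
  have hI : (Ideal.ofList (List.take 2 (List.map (fun i => pderiv i f) (List.finRange 3))) •
      (⊤ : Submodule (MvPolynomial (Fin 3) K) (MvPolynomial (Fin 3) K))) =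
      Ideal.span {pderiv 0 f, pderiv 1 f} := by
    rw [hl, Ideal.smul_eq_mul, Ideal.mul_top, Ideal.ofList]
    congr 1
    ext; simp
  have h3 := h2 u
  simp only [Nat.reduceAdd] at h3
  rw [hI] at h3
  apply h3
  simpa [List.finRange_succ] using hu

lemma eval_eq_zero_of_mem {a b u : MvPolynomial (Fin 3) K} (v : Fin 3 → K)
    (hu : u ∈ Ideal.span {a, b}) (ha : eval v a = 0) (hb : eval v b = 0) : eval v u = 0 := by
  obtain ⟨r, s, rfl⟩ := Ideal.mem_span_pair.1 hu
  simp [ha, hb]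

/-- The arithmetic content of the isolated singularity hypothesis. In each excluded case an explicit
`u ∉ (∂_x f, ∂_y f)` satisfies `u · ∂_z f ∈ (∂_x f, ∂_y f)`. -/
lemma isolated_conditions {lam : K} (h : HasIsolatedSingularity (n := 2) (fLam lam)) :
    (2 : K) ≠ 0 ∧ (3 : K) ≠ 0 ∧ lam ^ 6 ≠ 432 := by
  have key := mem_of_mul_mem h
  rw [pderiv0, pderiv1, pderiv2] at key
  have h2 : (2 : K) ≠ 0 := by
    intro h2
    have h6 : (6 : K) = 0 := by linear_combination 3 * h2
    -- In characteristic 2, `z · λxy = x · λyz`.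
    have := eval_eq_zero_of_mem ![0, 0, 1] (key (X 2) (by
      rw [h2, h6, Ideal.mem_span_pair]
      exact ⟨X 0, 0, by simp only [map_zero]; ring⟩)) (by simp) (by simp)
    simp at this
  have h3 : (3 : K) ≠ 0 := by
    intro h3
    have h6 : (6 : K) = 0 := by linear_combination 2 * h3
    -- In characteristic 3, `z · λxy = y · λxz`.
    have := eval_eq_zero_of_mem ![0, 0, 1] (key (X 2) (by
      rw [h3, h6, Ideal.mem_span_pair]
      exact ⟨0, X 1, by simp only [map_zero]; ring⟩)) (by simp) (by simp)
    simp at this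
  refine ⟨h2, h3, fun hl => ?_⟩
  have hl0 : lam ≠ 0 := by
    rintro rfl
    have : (432 : K) = 2 ^ 4 * 3 ^ 3 := by norm_num
    rw [this] at hl
    simp [h2, h3] at hl
  have h4 : (4 : K) ≠ 0 := by
    have : (4 : K) = 2 * 2 := by norm_num
    rw [this]; exact mul_ne_zero h2 h2
  have h6 : (6 : K) ≠ 0 := by
    have : (6 : K) = 2 * 3 := by norm_num
    rw [this]; exact mul_ne_zero h2 h3
  have h12 : (12 : K) ≠ 0 := by
    have : (12 : K) = 4 * 3 := by norm_num
    rw [this]; exact mul_ne_zero h4 h3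
  -- The curve `x = -λyz/2`, `y = λ²z²/6` lies in the zero set of all three partial derivatives.
  -- So `y · ∂_z f` is in `(∂_x f, ∂_y f)`, while `y ≠ 0` at the point of this curve with `z = 1`.
  have := eval_eq_zero_of_mem ![-lam ^ 3 / 12, lam ^ 2 / 6, 1] (key (C 72 * X 1) (by
      rw [Ideal.mem_span_pair]
      have hl' : (C lam : MvPolynomial (Fin 3) K) ^ 6 = 432 := by
        rw [← map_pow, hl, map_ofNat]
      refine ⟨36 * C lam * X 1 ^ 2 + 6 * C lam ^ 3 * X 1 * X 2 ^ 2 + C lam ^ 5 * X 2 ^ 4,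
        - 12 * C lam ^ 2 * X 1 * X 2 - 2 * C lam ^ 4 * X 2 ^ 3, ?_⟩
      simp only [map_ofNat]
      linear_combination X 1 * X 2 ^ 5 * hl')) (by
        simp; field_simp; ring) (by simp; field_simp; ring)
  have h72 : (72 : K) ≠ 0 := by
    have : (72 : K) = 6 * 12 := by norm_num
    rw [this]; exact mul_ne_zero h6 h12
  simp [h72, h6, hl0] at this

/-- An ideal containing the three partial derivatives of `f_λ` contains all monomials of weighted
degree at least `7`: the Milnor algebra has its socle in degree `6`. The elements `i2`, `i6`, `iD`
are inverses of `2`, `6` and `432 - λ⁶`. -/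
lemma monomial_mem_jacobian_s16 {R : Type*} [CommRing R] (J : Ideal R) {x y z l i2 i6 iD : R}
    (e2 : i2 * 2 = 1) (e6 : i6 * 6 = 1) (eD : iD * (432 - l ^ 6) = 1)
    (hx : 2 * x + l * (y * z) ∈ J) (hy : 3 * y ^ 2 + l * (x * z) ∈ J)
    (hz : 6 * z ^ 5 + l * (x * y) ∈ J) (a b c : ℕ) (h : 7 ≤ 3 * a + 2 * b + c) :
    x ^ a * y ^ b * z ^ c ∈ J := by
  -- Modulo `J`: `x = -λyz/2`, `y² = λ²yz²/6` and `(432 - λ⁶) yz⁵ = 0`.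
  have stepx : ∀ m, m * (y * z) ∈ J → m * x ∈ J := fun m hm => by
    have : m * x = (i2 * m) * (2 * x + l * (y * z)) - (i2 * l) * (m * (y * z)) := by
      linear_combination (-m * x) * e2
    rw [this]
    exact J.sub_mem (J.mul_mem_left _ hx) (J.mul_mem_left _ hm)
  have stepy : ∀ m, m * (y * z ^ 2) ∈ J → m * y ^ 2 ∈ J := fun m hm => by
    have : m * y ^ 2 = (i6 * m * 2) * (3 * y ^ 2 + l * (x * z))
        - (i6 * m * l * z) * (2 * x + l * (y * z)) + (i6 * l ^ 2) * (m * (y * z ^ 2)) := by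
      linear_combination (-m * y ^ 2) * e6
    rw [this]
    exact J.add_mem (J.sub_mem (J.mul_mem_left _ hy) (J.mul_mem_left _ hx)) (J.mul_mem_left _ hm)
  have hyz : y * z ^ 5 ∈ J := by
    have : y * z ^ 5 = (iD * 72 * y) * (6 * z ^ 5 + l * (x * y))
        - (iD * (36 * l * y ^ 2 + 6 * l ^ 3 * y * z ^ 2 + l ^ 5 * z ^ 4)) * (2 * x + l * (y * z))
        - (iD * (-12 * l ^ 2 * y * z - 2 * l ^ 4 * z ^ 3)) * (3 * y ^ 2 + l * (x * z)) := by
      linear_combination (-y * z ^ 5) * eD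
    rw [this]
    exact J.sub_mem (J.sub_mem (J.mul_mem_left _ hz) (J.mul_mem_left _ hx)) (J.mul_mem_left _ hy)
  have s1 : ∀ b c, 7 ≤ 2 * (b + 1) + c → y ^ (b + 1) * z ^ c ∈ J := by
    intro b
    induction b with
    | zero =>
      intro c hc
      obtain ⟨c, rfl⟩ : ∃ c', c = c' + 5 := ⟨c - 5, by omega⟩
      rw [show y ^ (0 + 1) * z ^ (c + 5) = z ^ c * (y * z ^ 5) by ring]
      exact J.mul_mem_left _ hyz
    | succ b ih =>
      intro c hc
      rw [show y ^ (b + 1 + 1) * z ^ c = (y ^ b * z ^ c) * y ^ 2 by ring]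
      apply stepy
      rw [show y ^ b * z ^ c * (y * z ^ 2) = y ^ (b + 1) * z ^ (c + 2) by ring]
      exact ih _ (by omega)
  have s2 : ∀ a b c, 7 ≤ 3 * a + 2 * (b + 1) + c → x ^ a * y ^ (b + 1) * z ^ c ∈ J := by
    intro a
    induction a with
    | zero =>
      intro b c hc
      rw [pow_zero, one_mul]
      exact s1 b c (by omega)
    | succ a ih =>
      intro b c hc
      rw [show x ^ (a + 1) * y ^ (b + 1) * z ^ c = (x ^ a * y ^ (b + 1) * z ^ c) * x by ring]
      apply stepx
      rw [show x ^ a * y ^ (b + 1) * z ^ c * (y * z) = x ^ a * y ^ (b + 1 + 1) * z ^ (c + 1) by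
        ring]
      exact ih _ _ (by omega)
  have s3 : ∀ c, z ^ (c + 7) ∈ J := by
    intro c
    have h1 := s2 1 0 (c + 2) (by omega)
    have : z ^ (c + 7) = (i6 * z ^ (c + 2)) * (6 * z ^ 5 + l * (x * y))
        - (i6 * l) * (x ^ 1 * y ^ (0 + 1) * z ^ (c + 2)) := by
      linear_combination (-z ^ (c + 7)) * e6
    rw [this]
    exact J.sub_mem (J.mul_mem_left _ hz) (J.mul_mem_left _ h1)
  rcases b with _ | b
  · rcases a with _ | a
    · obtain ⟨c, rfl⟩ : ∃ c', c = c' + 7 := ⟨c - 7, by omega⟩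
      simpa using s3 c
    · rw [show x ^ (a + 1) * y ^ 0 * z ^ c = (x ^ a * z ^ c) * x by ring]
      apply stepx
      rw [show x ^ a * z ^ c * (y * z) = x ^ a * y ^ (0 + 1) * z ^ (c + 1) by ring]
      exact s2 _ _ _ (by omega)
  · exact s2 a b c h

/-- Differentiating `f^{k+1} ∈ m^{[Q]}` shows that the Jacobian ideal multiplies `f^k` into
`m^{[Q]}`. If `k + 3 ≤ Q`, then the monomial pairing a given monomial of `f^k` to `(xyz)^{Q-1}` has
weighted degree at least `12`, so it lies in the Jacobian ideal, and hence `f^k ∈ m^{[Q]}`. -/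
lemma descent_step {p : ℕ} [CharP K p] {lam : K} (h2 : (2 : K) ≠ 0) (h3 : (3 : K) ≠ 0)
    (hl : lam ^ 6 ≠ 432) {Q k : ℕ} (hQ : p ∣ Q) (hk : ¬ p ∣ k + 1) (hkQ : k + 3 ≤ Q)
    (h : fLam lam ^ (k + 1) ∈ frobeniusPower K 2 Q) :
    fLam lam ^ k ∈ frobeniusPower K 2 Q := by
  have hk0 : ((k + 1 : ℕ) : K) ≠ 0 := fun h0 => hk ((CharP.cast_eq_zero_iff K p _).1 h0)
  have hd : ∀ i, fLam lam ^ k * pderiv i (fLam lam) ∈ frobeniusPower K 2 Q := by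
    intro i
    have h1 := Ideal.mul_mem_left _ (C ((k + 1 : ℕ) : K)⁻¹) (pderiv_mem hQ h i)
    rw [Derivation.leibniz_pow, Nat.add_sub_cancel, nsmul_eq_mul, ← mul_assoc,
      ← map_natCast (C : K →+* MvPolynomial (Fin 3) K), ← map_mul, inv_mul_cancel₀ hk0, map_one,
      one_mul, smul_eq_mul] at h1
    exact h1
  have h6 : (6 : K) ≠ 0 := by
    have : (6 : K) = 2 * 3 := by norm_num
    rw [this]; exact mul_ne_zero h2 h3
  let J : Ideal (MvPolynomial (Fin 3) K) :=
    Submodule.comap (LinearMap.mulLeft (MvPolynomial (Fin 3) K) (fLam lam ^ k))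
      (frobeniusPower K 2 Q)
  have hJ : ∀ a b c : ℕ, 7 ≤ 3 * a + 2 * b + c →
      (X 0 ^ a * X 1 ^ b * X 2 ^ c : MvPolynomial (Fin 3) K) ∈ J := by
    refine monomial_mem_jacobian_s16 J (l := C lam) (i2 := C 2⁻¹) (i6 := C 6⁻¹)
      (iD := C (432 - lam ^ 6)⁻¹) ?_ ?_ ?_ ?_ ?_ ?_
    · rw [← map_ofNat C 2, ← map_mul, inv_mul_cancel₀ h2, map_one]
    · rw [← map_ofNat C 6, ← map_mul, inv_mul_cancel₀ h6, map_one]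
    · rw [← map_ofNat C 432, ← map_pow, ← map_sub, ← map_mul,
        inv_mul_cancel₀ (sub_ne_zero.2 hl.symm), map_one]
    · have := hd 0
      rw [pderiv0, map_ofNat] at this
      exact this
    · have := hd 1
      rw [pderiv1, map_ofNat] at this
      exact this
    · have := hd 2
      rw [pderiv2, map_ofNat] at this
      exact this
  rw [mem_frobeniusPower]
  intro d hdc
  by_contra! hc
  have hw := weight_of_coeff_ne_zero hdc
  have d0 := hc 0
  have d1 := hc 1
  have d2 := hc 2
  have hm : fLam lam ^ k * (X 0 ^ (Q - 1 - d 0) * X 1 ^ (Q - 1 - d 1) * X 2 ^ (Q - 1 - d 2)) ∈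
      frobeniusPower K 2 Q := hJ _ _ _ (by omega)
  have he := monomial_expo (Q - 1 - d 0) (Q - 1 - d 1) (Q - 1 - d 2) (1 : K)
  rw [C_1, one_mul] at he
  rw [← he, mem_frobeniusPower] at hm
  obtain ⟨i, hi⟩ := hm (d + expo (Q - 1 - d 0) (Q - 1 - d 1) (Q - 1 - d 2)) (by
    rw [coeff_mul_monomial, mul_one]; exact hdc)
  have hx : expo (Q - 1 - d 0) (Q - 1 - d 1) (Q - 1 - d 2) i = Q - 1 - d i := by
    fin_cases i <;> rfl
  rw [Finsupp.add_apply, hx] at hi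
  have := hc i
  omega

lemma descent {p : ℕ} [CharP K p] {lam : K} (h2 : (2 : K) ≠ 0) (h3 : (3 : K) ≠ 0)
    (hl : lam ^ 6 ≠ 432) {Q a r : ℕ} (hQ : p ∣ Q) (hr : r < p) (hk : p * a + r + 2 ≤ Q)
    (h : fLam lam ^ (p * a + r) ∈ frobeniusPower K 2 Q) :
    fLam lam ^ (p * a) ∈ frobeniusPower K 2 Q := by
  induction r with
  | zero => exact h
  | succ r ih =>
    refine ih (by omega) (by omega) (descent_step h2 h3 hl hQ ?_ (by omega) h)
    rw [add_assoc, Nat.dvd_add_right (dvd_mul_right p a)]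
    exact Nat.not_dvd_of_pos_of_lt (by omega) hr

/-- The lower bound `μ_f(p^{e+1}) ≥ (p-1) p^e` for an isolated singularity. -/
lemma pow_notMem_of_isolated (p : ℕ) [Fact p.Prime] [CharP K p] {lam : K} (h2 : (2 : K) ≠ 0)
    (h3 : (3 : K) ≠ 0) (hl : lam ^ 6 ≠ 432) (e : ℕ) :
    fLam lam ^ ((p - 1) * p ^ e - 1) ∉ frobeniusPower K 2 (p ^ (e + 1)) := by
  have hp := (Fact.out : p.Prime).two_le
  induction e with
  | zero =>
    intro h
    have h' := descent h2 h3 hl (a := 0) (r := p - 2) (p := p) (Q := p) dvd_rfl (by omega)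
      (by omega) (by
        rw [mul_zero, zero_add]
        simpa [Nat.sub_sub] using h)
    rw [mul_zero, pow_zero, mem_frobeniusPower] at h'
    obtain ⟨i, hi⟩ := h' 0 (by simp)
    simp at hi
    omega
  | succ e ih =>
    intro h
    apply ih
    have hpos : 0 < p ^ e := by positivity
    have hA : 0 < (p - 1) * p ^ e := Nat.mul_pos (by omega) hpos
    have hmul : (p - 1) * p ^ (e + 1) = p * ((p - 1) * p ^ e) := by ring
    have hmul2 : p * ((p - 1) * p ^ e) = p * ((p - 1) * p ^ e - 1) + p := by
      rw [← Nat.mul_succ]; congr 1; omega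
    have hle : p * ((p - 1) * p ^ e) + 1 ≤ p ^ (e + 1 + 1) := by
      have : p * ((p - 1) * p ^ e) + p ^ (e + 1) = p ^ (e + 1 + 1) := by
        obtain ⟨r, rfl⟩ : ∃ r, p = r + 1 := ⟨p - 1, by omega⟩
        simp only [Nat.add_sub_cancel]
        ring
      have : 0 < p ^ (e + 1) := by positivity
      omega
    have h' := descent h2 h3 hl (a := (p - 1) * p ^ e - 1) (r := p - 1) (p := p)
      (Q := p ^ (e + 1 + 1)) (dvd_pow_self p (by omega)) (by omega) (by omega) (by
        convert h using 2
        omega)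
    rw [mul_comm, pow_mul, pow_succ p (e + 1), mul_comm _ p, pow_p_mem_iff] at h'
    exact h'

/-! ### The F-pure threshold -/

lemma hasFpt_one (p : ℕ) [Fact p.Prime] [CharP K p] (lam : K)
    (hφ : coeff (Finsupp.equivFunOnFinite.symm fun _ : Fin 3 => p - 1) (fLam lam ^ (p - 1)) ≠ 0) :
    HasFpt (n := 2) p (fLam lam) 1 := by
  have hp := (Fact.out : p.Prime).pos
  have hmu : ∀ e, muF (n := 2) (fLam lam) (p ^ e) = p ^ e := by
    intro e
    have hq : p ^ e - 1 + 1 = p ^ e := Nat.sub_add_cancel (Nat.pow_pos hp)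
    have h := muF_eq (n := 2) (f := fLam lam) (q := p ^ e) (N := p ^ e - 1)
      (by rw [hq]; exact fLam_pow_mem p lam e) (pow_sub_one_notMem p lam hφ e)
    rw [h, hq]
  unfold HasFpt
  have hp0 : (p : ℝ) ≠ 0 := by positivity
  simp [hmu, hp0]

lemma hasFpt_of_phi_zero (p : ℕ) [Fact p.Prime] [CharP K p] {lam : K} (h2 : (2 : K) ≠ 0)
    (h3 : (3 : K) ≠ 0) (hl : lam ^ 6 ≠ 432)
    (hφ : coeff (Finsupp.equivFunOnFinite.symm fun _ : Fin 3 => p - 1) (fLam lam ^ (p - 1)) = 0) :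
    HasFpt (n := 2) p (fLam lam) (1 - 1 / (p : ℝ)) := by
  have hp := (Fact.out : p.Prime).two_le
  have hb : fLam lam ^ (p - 1) ∈ frobeniusPower K 2 p := by
    have h := fLam_sub_mem p lam
    rwa [hφ, map_zero, sub_zero] at h
  have hmu : ∀ e, muF (n := 2) (fLam lam) (p ^ (e + 1)) = (p - 1) * p ^ e := by
    intro e
    have hq : (p - 1) * p ^ e - 1 + 1 = (p - 1) * p ^ e :=
      Nat.sub_add_cancel (Nat.mul_pos (by omega) (by positivity))
    have hm := (pow_pow_mem_iff (p := p) e).2 hb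
    rw [← pow_mul, ← pow_succ] at hm
    have h := muF_eq (n := 2) (f := fLam lam) (q := p ^ (e + 1)) (N := (p - 1) * p ^ e - 1)
      (by rw [hq]; exact hm) (pow_notMem_of_isolated p h2 h3 hl e)
    rw [h, hq]
  unfold HasFpt
  rw [← tendsto_add_atTop_iff_nat 1]
  have hp0 : (p : ℝ) ≠ 0 := by positivity
  refine tendsto_const_nhds.congr fun e => ?_
  rw [hmu, Nat.cast_mul, Nat.cast_sub (by omega)]
  push_cast
  field_simp
  ring

end Family

/-- for `f_λ = x² + y³ + z⁶ + λxyz`, the coefficient of `(xyz)^{p−1}` in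
`f_λ^{p−1}` is `φ(λ) = Σ_{s=0}^{⌊(p−1)/6⌋} ((6s)!/((3s)!(2s)!s!)) λ^{p−1−6s}`; moreover,
if `f_λ` has an isolated singularity, then `fpt(f_λ) = 1` when `φ(λ) ≠ 0` and
`fpt(f_λ) = 1 − 1/p` when `φ(λ) = 0`. -/
theorem statement16 {K : Type*} [Field K] {p : ℕ} [Fact p.Prime] [CharP K p]
    (lam : K) (f : MvPolynomial (Fin 3) K)
    (hf : f = X 0 ^ 2 + X 1 ^ 3 + X 2 ^ 6 + C lam * (X 0 * X 1 * X 2))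
    (φ : K)
    (hφ : φ = ∑ s ∈ Finset.range ((p - 1) / 6 + 1),
      (((6 * s).factorial / ((3 * s).factorial * (2 * s).factorial * s.factorial) : ℕ) : K) *
        lam ^ (p - 1 - 6 * s)) :
    coeff (Finsupp.equivFunOnFinite.symm fun _ : Fin 3 => p - 1) (f ^ (p - 1)) = φ ∧
    (HasIsolatedSingularity (n := 2) f →
      (φ ≠ 0 → HasFpt p f 1) ∧ (φ = 0 → HasFpt p f (1 - 1 / (p : ℝ)))) := by
  have hf' : f = fLam lam := hf
  have hc : coeff (Finsupp.equivFunOnFinite.symm fun _ : Fin 3 => p - 1) (f ^ (p - 1)) = φ := by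
    rw [hf, hφ]
    exact coeff_phi lam
  refine ⟨hc, fun h => ?_⟩
  subst hf'
  obtain ⟨h2, h3, hl⟩ := isolated_conditions h
  exact ⟨fun h0 => hasFpt_one p lam (hc ▸ h0), fun h0 => hasFpt_of_phi_zero p h2 h3 hl (hc.trans h0)⟩
end

section
/- Let K be a field of characteristic p > 0, let a, b, c be positive integers with 1/a + 1/b + 1/c < 1 (equivalently bc + ac + ab < abc), let λ ∈ K, and let f_λ = x^a + y^b + z^c + λxyz ∈ K[x, y, z]. Then for every power q = p^e, the coefficient of (xyz)^{q−1} in f_λ^{q−1} equals λ^{q−1}. -/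
/-!
Give `x, y, z` the weights `bc, ac, ab`. Then `g = x^a + y^b + z^c` is weighted homogeneous of
degree `abc`, while `xyz` has the strictly smaller degree `s = bc + ac + ab`. In the binomial
expansion of `(g + λxyz)^n` the term containing `g^m` is weighted homogeneous of degree
`m * abc + (n - m) * s`, which equals the degree `n * s` of `(xyz)^n` only for `m = 0`; that term
is `λ^n (xyz)^n`. The argument works for every exponent `n`, in any characteristic.
-/

open MvPolynomial Filter Topology

/-- The coefficient of `(xyz)^n` in `(x^a + y^b + z^c + λxyz)^n` is `λ^n`, for every `n`. -/
lemma coeff_diagonal_pow {K : Type*} [Field K] (a b c : ℕ)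
    (habc : b * c + a * c + a * b < a * b * c) (lam : K) (n : ℕ) :
    coeff (Finsupp.equivFunOnFinite.symm fun _ : Fin 3 => n)
      ((X 0 ^ a + X 1 ^ b + X 2 ^ c + C lam * (X 0 * X 1 * X 2) :
        MvPolynomial (Fin 3) K) ^ n) = lam ^ n := by
  set w : Fin 3 → ℕ := ![b * c, a * c, a * b] with hw
  have h0 : IsWeightedHomogeneous w (X 0 : MvPolynomial (Fin 3) K) (b * c) :=
    isWeightedHomogeneous_X K w 0
  have h1 : IsWeightedHomogeneous w (X 1 : MvPolynomial (Fin 3) K) (a * c) :=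
    isWeightedHomogeneous_X K w 1
  have h2 : IsWeightedHomogeneous w (X 2 : MvPolynomial (Fin 3) K) (a * b) :=
    isWeightedHomogeneous_X K w 2
  have hg : IsWeightedHomogeneous w
      (X 0 ^ a + X 1 ^ b + X 2 ^ c : MvPolynomial (Fin 3) K) (a * b * c) := by
    have e0 := h0.pow a
    have e1 := h1.pow b
    have e2 := h2.pow c
    rw [smul_eq_mul] at e0 e1 e2
    rw [show a * (b * c) = a * b * c by ring] at e0
    rw [show b * (a * c) = a * b * c by ring] at e1
    rw [show c * (a * b) = a * b * c by ring] at e2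
    exact (e0.add e1).add e2
  have hm : IsWeightedHomogeneous w
      (C lam * (X 0 * X 1 * X 2) : MvPolynomial (Fin 3) K) (b * c + a * c + a * b) := by
    simpa using (isWeightedHomogeneous_C w lam).mul ((h0.mul h1).mul h2)
  have hwt : Finsupp.weight w (Finsupp.equivFunOnFinite.symm fun _ : Fin 3 => n)
      = n * (b * c + a * c + a * b) := by
    rw [Finsupp.weight_apply, Finsupp.sum_fintype _ _ (by simp)]
    simp [Fin.sum_univ_three, hw]
    ring
  rw [add_pow, coeff_sum, Finset.sum_eq_single 0]
  · have hmon : (X 0 * X 1 * X 2 : MvPolynomial (Fin 3) K) ^ n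
        = monomial (Finsupp.equivFunOnFinite.symm fun _ : Fin 3 => n) 1 := by
      rw [monomial_eq, Finsupp.prod_fintype _ _ (by simp)]
      simp [Fin.prod_univ_three, mul_pow]
    rw [pow_zero, one_mul, Nat.sub_zero, Nat.choose_zero_right, Nat.cast_one, mul_one,
      mul_pow, hmon, ← C_pow, coeff_C_mul, coeff_monomial, if_pos rfl, mul_one]
  · intro m hmn hm0
    have hmn' : m ≤ n := by simpa [Nat.lt_succ_iff] using hmn
    rw [← C_eq_coe_nat]
    refine (((hg.pow m).mul (hm.pow (n - m))).mul
      (isWeightedHomogeneous_C w _)).coeff_eq_zero _ ?_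
    obtain ⟨k, rfl⟩ := Nat.exists_eq_add_of_le hmn'
    rw [hwt, Nat.add_sub_cancel_left]
    simp only [smul_eq_mul, add_zero]
    have := Nat.mul_lt_mul_of_pos_left habc (Nat.pos_of_ne_zero hm0)
    rw [add_mul]
    omega
  · simp

/-- for positive integers `a, b, c` with `1/a + 1/b + 1/c < 1`
(equivalently `bc + ac + ab < abc`) and `f_λ = x^a + y^b + z^c + λxyz`, the coefficient
of `(xyz)^{q−1}` in `f_λ^{q−1}` equals `λ^{q−1}` for every power `q = p^e`. -/
theorem statement17 {K : Type*} [Field K] {p : ℕ} [Fact p.Prime] [CharP K p]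
    (a b c : ℕ) (ha : 0 < a) (hb : 0 < b) (hc : 0 < c)
    (habc : b * c + a * c + a * b < a * b * c)
    (lam : K) (f : MvPolynomial (Fin 3) K)
    (hf : f = X 0 ^ a + X 1 ^ b + X 2 ^ c + C lam * (X 0 * X 1 * X 2))
    (e : ℕ) (q : ℕ) (hq : q = p ^ e) :
    coeff (Finsupp.equivFunOnFinite.symm fun _ : Fin 3 => q - 1) (f ^ (q - 1)) =
      lam ^ (q - 1) := by
  subst hf
  exact coeff_diagonal_pow a b c habc lam (q - 1)
end

section
/- Let K be a field of characteristic p > 0, let a, b, c be positive integers with 1/a + 1/b + 1/c < 1 (equivalently bc + ac + ab < abc), let λ ∈ K with λ ≠ 0 and λ^{q−1} ≠ 0 interpreted in K, and let f_λ = x^a + y^b + z^c + λxyz ∈ K[x, y, z]. Then μ_{f_λ}(p^e) = p^e for every e ≥ 0, and consequently fpt(f_λ) = 1. -/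
/-!
Give `x, y, z` the weights `bc, ac, ab`. Then `x^a, y^b, z^c` all have weight `abc`, while `xyz` has
the strictly smaller weight `bc + ac + ab`. Hence `λ^n (xyz)^n` is the part of lowest weight of
`f^n`, so the coefficient of `(xyz)^n` in `f^n` is `λ^n ≠ 0` (`coeff_pow_eq`). For `n = q - 1` this
monomial lies outside the monomial ideal `m^{[q]}`, so `f^(q-1) ∉ m^{[q]}`. Conversely
`f^q ∈ m^{[q]}` because the `q`-th power map is additive in characteristic `p`.
-/

open MvPolynomial Filter Topology

/-- The exponent vector of `x^i y^j z^k`. -/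
noncomputable def expVec (i j k : ℕ) : Fin 3 →₀ ℕ :=
  Finsupp.equivFunOnFinite.symm ![i, j, k]

lemma poly_eq_monomials {K : Type*} [Field K] (a b c : ℕ) (lam : K) :
    (X 0 ^ a + X 1 ^ b + X 2 ^ c + C lam * (X 0 * X 1 * X 2) : MvPolynomial (Fin 3) K) =
      monomial (expVec a 0 0) 1 + monomial (expVec 0 b 0) 1 + monomial (expVec 0 0 c) 1 +
        monomial (expVec 1 1 1) lam := by
  simp [monomial_eq, Finsupp.prod_fintype, Fin.prod_univ_three, expVec]

/-- For the weights `bc, ac, ab`, every term of `f^n` has weight at least that of `(xyz)^n`. -/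
lemma coeff_pow_eq_zero {K : Type*} [Field K] (a b c : ℕ)
    (habc : b * c + a * c + a * b < a * b * c) (lam : K) (n : ℕ) :
    ∀ d : Fin 3 →₀ ℕ,
      b * c * d 0 + a * c * d 1 + a * b * d 2 < n * (b * c + a * c + a * b) →
      coeff d ((monomial (expVec a 0 0) 1 + monomial (expVec 0 b 0) 1 +
        monomial (expVec 0 0 c) 1 + monomial (expVec 1 1 1) lam :
          MvPolynomial (Fin 3) K) ^ n) = 0 := by
  induction n with
  | zero => intro d hd; simp at hd
  | succ n ih =>
    intro d hd
    -- a factor `x^i y^j z^k` of weight at least that of `xyz` contributes nothing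
    have key : ∀ i j k : ℕ, ∀ r : K,
        b * c + a * c + a * b ≤ b * c * i + a * c * j + a * b * k →
        coeff d (monomial (expVec i j k) r * (monomial (expVec a 0 0) 1 +
          monomial (expVec 0 b 0) 1 + monomial (expVec 0 0 c) 1 +
          monomial (expVec 1 1 1) lam : MvPolynomial (Fin 3) K) ^ n) = 0 := by
      intro i j k r hw
      rw [coeff_monomial_mul']
      split_ifs with h
      · rw [ih, mul_zero]
        obtain ⟨d', rfl⟩ := exists_add_of_le h
        simp [expVec] at hd ⊢
        linarith
      · rfl
    rw [pow_succ', add_mul, add_mul, add_mul, coeff_add, coeff_add, coeff_add,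
      key, key, key, key]
    · simp
    all_goals nlinarith

lemma coeff_pow_eq {K : Type*} [Field K] (a b c : ℕ)
    (habc : b * c + a * c + a * b < a * b * c) (lam : K) (n : ℕ) :
    coeff (expVec n n n) ((monomial (expVec a 0 0) 1 + monomial (expVec 0 b 0) 1 +
      monomial (expVec 0 0 c) 1 + monomial (expVec 1 1 1) lam :
        MvPolynomial (Fin 3) K) ^ n) = lam ^ n := by
  induction n with
  | zero =>
    have h : expVec 0 0 0 = 0 := by
      ext i; fin_cases i <;> rfl
    simp [h]
  | succ n ih =>
    have key : ∀ i j k : ℕ, ∀ r : K,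
        b * c + a * c + a * b < b * c * i + a * c * j + a * b * k →
        coeff (expVec (n + 1) (n + 1) (n + 1)) (monomial (expVec i j k) r *
          (monomial (expVec a 0 0) 1 + monomial (expVec 0 b 0) 1 + monomial (expVec 0 0 c) 1 +
          monomial (expVec 1 1 1) lam : MvPolynomial (Fin 3) K) ^ n) = 0 := by
      intro i j k r hw
      rw [coeff_monomial_mul']
      split_ifs with h
      · rw [coeff_pow_eq_zero a b c habc, mul_zero]
        obtain ⟨d, hd⟩ := exists_add_of_le h
        have h0 := DFunLike.congr_fun hd 0
        have h1 := DFunLike.congr_fun hd 1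
        have h2 := DFunLike.congr_fun hd 2
        rw [hd]
        simp [expVec] at h0 h1 h2 ⊢
        have e0 := congrArg (b * c * ·) h0
        have e1 := congrArg (a * c * ·) h1
        have e2 := congrArg (a * b * ·) h2
        beta_reduce at e0 e1 e2
        linarith
      · rfl
    have hs : expVec (n + 1) (n + 1) (n + 1) = expVec 1 1 1 + expVec n n n := by
      ext i; fin_cases i <;> simp [expVec, add_comm]
    rw [pow_succ', add_mul, add_mul, add_mul, coeff_add, coeff_add, coeff_add,
      key, key, key, hs, coeff_monomial_mul, ih, pow_succ']
    · simp
    all_goals nlinarith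

lemma coeff_eq_zero_of_mem {K : Type*} [Field K] {q : ℕ} {g : MvPolynomial (Fin 3) K}
    (hg : g ∈ frobeniusPower K 2 q) {d : Fin 3 →₀ ℕ} (hd : ∀ i, d i < q) : coeff d g = 0 := by
  have hI : frobeniusPower K 2 q = Ideal.span ((fun s => monomial s (1 : K)) ''
      (Set.range fun i : Fin 3 => Finsupp.single i q)) := by
    rw [frobeniusPower, ← Set.range_comp]
    simp [Function.comp_def, X_pow_eq_monomial]
  rw [hI, mem_ideal_span_monomial_image] at hg
  by_contra h
  obtain ⟨_, ⟨i, rfl⟩, hi⟩ := hg d (mem_support_iff.2 h)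
  have := hi i
  simp at this
  exact absurd (hd i) (not_lt.2 this)

/-- for positive integers `a, b, c` with `1/a + 1/b + 1/c < 1`
(equivalently `bc + ac + ab < abc`), `λ ≠ 0`, and `f_λ = x^a + y^b + z^c + λxyz`, one has
`μ_{f_λ}(p^e) = p^e` for every `e ≥ 0`, and consequently `fpt(f_λ) = 1`. -/
theorem statement18 {K : Type*} [Field K] {p : ℕ} [Fact p.Prime] [CharP K p]
    (a b c : ℕ) (ha : 0 < a) (hb : 0 < b) (hc : 0 < c)
    (habc : b * c + a * c + a * b < a * b * c)
    (lam : K) (hlam : lam ≠ 0) (f : MvPolynomial (Fin 3) K)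
    (hf : f = X 0 ^ a + X 1 ^ b + X 2 ^ c + C lam * (X 0 * X 1 * X 2)) :
    (∀ e : ℕ, muF (n := 2) f (p ^ e) = p ^ e) ∧ HasFpt p f 1 := by
  have hmu : ∀ e : ℕ, muF (n := 2) f (p ^ e) = p ^ e := by
    intro e
    have hq : 0 < p ^ e := pow_pos (Fact.out : p.Prime).pos e
    have hX : ∀ i : Fin 3, (X i : MvPolynomial (Fin 3) K) ^ p ^ e ∈ frobeniusPower K 2 (p ^ e) :=
      fun i => Ideal.subset_span ⟨i, rfl⟩
    have hXk : ∀ i : Fin 3, ∀ k : ℕ, 0 < k →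
        ((X i : MvPolynomial (Fin 3) K) ^ k) ^ p ^ e ∈ frobeniusPower K 2 (p ^ e) := by
      intro i k hk
      rw [← pow_mul, mul_comm, pow_mul]
      exact Ideal.pow_mem_of_mem _ (hX i) k hk
    have hmem : f ^ p ^ e ∈ frobeniusPower K 2 (p ^ e) := by
      rw [hf, add_pow_char_pow, add_pow_char_pow, add_pow_char_pow, mul_pow, mul_pow]
      exact add_mem (add_mem (add_mem (hXk 0 a ha) (hXk 1 b hb)) (hXk 2 c hc))
        (Ideal.mul_mem_left _ _ (Ideal.mul_mem_left _ _ (hX 2)))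
    refine le_antisymm (Nat.sInf_le hmem) (le_csInf ⟨_, hmem⟩ ?_)
    intro k hk
    by_contra! hlt
    have hmem' : f ^ (p ^ e - 1) ∈ frobeniusPower K 2 (p ^ e) :=
      Ideal.mem_of_dvd _ (pow_dvd_pow f (by omega)) hk
    have h0 := coeff_eq_zero_of_mem hmem' (d := expVec (p ^ e - 1) (p ^ e - 1) (p ^ e - 1))
      (by intro i; fin_cases i <;> simp [expVec] <;> omega)
    rw [hf, poly_eq_monomials, coeff_pow_eq a b c habc] at h0
    exact pow_ne_zero _ hlam h0
  refine ⟨hmu, ?_⟩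
  have hp : (p : ℝ) ≠ 0 := Nat.cast_ne_zero.2 (Fact.out : p.Prime).ne_zero
  refine tendsto_const_nhds.congr fun e => ?_
  rw [hmu e, Nat.cast_pow, div_self (pow_ne_zero e hp)]
end

section
/- Let f ∈ R = K[x_0, …, x_n] be a quasi-homogeneous polynomial of degree d and type α with an isolated singularity, set w = α_0 + ⋯ + α_n, let 1 ≤ t ≤ p, and assume p ≥ nd − w − td + 1. Let q = p^e with e ≥ 1 and let g ∈ R be a quasi-homogeneous polynomial with p·deg(g) ≤ wq − pd − p (i.e. deg(g) ≤ w·(q/p) − d − 1). If f^{p−t}·g^p ∈ m^{[q]}, then g^p ∈ m^{[q]}. -/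
/-!
The argument removes the factors `f` one at a time. If `k + 1 < p` and
`f ^ (k + 1) * g ^ p ∈ m^{[q]}`, then applying `∂/∂x_i`, which preserves `m^{[q]}` and kills
`g ^ p` in characteristic `p`, and dividing by `k + 1` gives
`f ^ k * g ^ p * ∂f/∂x_i ∈ m^{[q]}`; so `a = f ^ k * g ^ p` multiplies the Jacobian ideal `J`
into `m^{[q]}`.

The partial derivatives form a regular sequence of forms of degrees `d - α_i`, so `R / J` vanishes
in degrees above `(n + 1) d - 2 w` (`mem_initialIdeal_of_degree_gt`). If `a ∉ m^{[q]}`, some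
monomial of `a` divides `∏ x_i ^ (q - 1)`, and multiplying `a` by the complementary monomial, of
degree `w (q - 1) - deg a`, gives an element outside `m^{[q]}`
(`mem_frobeniusPower_of_forall_monomial`). The numerical hypotheses make that degree exceed
`(n + 1) d - 2 w`, so the complementary monomial lies in `J`: a contradiction. Hence
`a ∈ m^{[q]}`, and the procedure can be repeated until no factor `f` is left.

The vanishing of `R / J` in high degrees comes from Hilbert series. Multiplication by a form of
degree `c` that is regular modulo `I` gives `H(R/(I + a)) = H(R/I) (1 - T ^ c)`. Comparing the
sequence of partial derivatives with the sequence of variables yields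
`H(R/J) ∏ (1 - T ^ α_i) = h ∏ (1 - T ^ (d - α_i))` for a constant `h`. Since `R / J` has Krull
dimension at most `0`, it is finite-dimensional, so `H(R/J)` is a polynomial and its degree can be
read off.
-/

open MvPolynomial Filter Topology

namespace QuasiHom

/-! ### Hilbert series and regular sequences -/

section Graded

variable {K A : Type*} [Field K] [CommRing A] [Algebra K A]

/-- The degree-`N` piece of the quotient `A / I`. -/
noncomputable def gradedPiece (𝒜 : ℕ → Submodule K A) (I : Ideal A) (N : ℕ) :
    Submodule K (A ⧸ I) :=
  (𝒜 N).map (Ideal.Quotient.mkₐ K I).toLinearMap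

/-- The Hilbert series of `A / I`, with integer coefficients. -/
noncomputable def hilbertSeries (𝒜 : ℕ → Submodule K A) (I : Ideal A) : PowerSeries ℤ :=
  PowerSeries.mk fun N => (Module.finrank K (gradedPiece 𝒜 I N) : ℤ)

/-- The ideal generated by the first `k` terms of a finite sequence. -/
def initialIdeal {m : ℕ} (F : Fin m → A) (k : ℕ) : Ideal A :=
  Ideal.span (F '' {j | (j : ℕ) < k})

/-- Weak regularity of a finite sequence, stated elementwise: `F k` is a nonzerodivisor modulo
the terms before it. -/
def IsWeaklyRegularFamily {m : ℕ} (F : Fin m → A) : Prop :=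
  ∀ (k : Fin m) (r : A), F k * r ∈ initialIdeal F k → r ∈ initialIdeal F k

lemma initialIdeal_zero {m : ℕ} (F : Fin m → A) : initialIdeal F 0 = ⊥ := by
  simp [initialIdeal]

lemma initialIdeal_succ {m : ℕ} (F : Fin m → A) (k : ℕ) (hk : k < m) :
    initialIdeal F (k + 1) = initialIdeal F k ⊔ Ideal.span {F ⟨k, hk⟩} := by
  unfold initialIdeal
  rw [← Ideal.span_union]
  congr 1
  ext x
  simp only [Set.mem_image, Set.mem_ofPred_eq, Set.mem_union, Set.mem_singleton_iff]
  constructor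
  · rintro ⟨j, hj, rfl⟩
    rcases Nat.lt_succ_iff_lt_or_eq.mp hj with h | h
    · exact Or.inl ⟨j, h, rfl⟩
    · exact Or.inr (by congr 1; exact Fin.ext h)
  · rintro (⟨j, hj, rfl⟩ | rfl)
    · exact ⟨j, by omega, rfl⟩
    · exact ⟨⟨k, hk⟩, by simp, rfl⟩

variable (𝒜 : ℕ → Submodule K A)

lemma mem_gradedPiece {I : Ideal A} {N : ℕ} {x : A ⧸ I} :
    x ∈ gradedPiece 𝒜 I N ↔ ∃ y ∈ 𝒜 N, Ideal.Quotient.mk I y = x := by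
  simp [gradedPiece]

variable [GradedAlgebra 𝒜]

lemma isHomogeneous_initialIdeal {m : ℕ} (F : Fin m → A) (c : Fin m → ℕ)
    (hF : ∀ i, F i ∈ 𝒜 (c i)) (k : ℕ) : (initialIdeal F k).IsHomogeneous 𝒜 := by
  apply Ideal.homogeneous_span
  rintro _ ⟨j, -, rfl⟩
  exact ⟨c j, hF j⟩

/-- The Hilbert function version of the exact sequence
`0 → (A/I)(-c) → A/I → A/(I + a) → 0`. -/
lemma finrank_gradedPiece_step [∀ N, FiniteDimensional K (𝒜 N)] {I : Ideal A}
    (hI : I.IsHomogeneous 𝒜) {a : A} {c : ℕ} (ha : a ∈ 𝒜 c)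
    (hreg : ∀ r, a * r ∈ I → r ∈ I) (N : ℕ) :
    Module.finrank K (gradedPiece 𝒜 I N) =
      Module.finrank K (gradedPiece 𝒜 (I ⊔ Ideal.span {a}) N) +
        if c ≤ N then Module.finrank K (gradedPiece 𝒜 I (N - c)) else 0 := by
  let φ : (A ⧸ I) →ₗ[K] (A ⧸ (I ⊔ Ideal.span {a})) :=
    (Ideal.Quotient.factorₐ K (le_sup_left : I ≤ I ⊔ Ideal.span {a})).toLinearMap
  let V := gradedPiece 𝒜 I N
  have hfin : FiniteDimensional K V := by
    unfold V gradedPiece; infer_instance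
  have hmap : V.map φ = gradedPiece 𝒜 (I ⊔ Ideal.span {a}) N := by
    ext x
    simp only [Submodule.mem_map, V, mem_gradedPiece]
    constructor
    · rintro ⟨_, ⟨y, hy, rfl⟩, rfl⟩
      exact ⟨y, hy, rfl⟩
    · rintro ⟨y, hy, rfl⟩
      exact ⟨_, ⟨y, hy, rfl⟩, rfl⟩
  let μ : (A ⧸ I) →ₗ[K] (A ⧸ I) := LinearMap.mulLeft K (Ideal.Quotient.mk I a)
  have hμ : Function.Injective μ := by
    rw [← LinearMap.ker_eq_bot, LinearMap.ker_eq_bot']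
    intro x hx
    obtain ⟨r, rfl⟩ := Ideal.Quotient.mk_surjective x
    have : Ideal.Quotient.mk I (a * r) = 0 := by simpa [μ] using hx
    exact Ideal.Quotient.eq_zero_iff_mem.mpr (hreg r (Ideal.Quotient.eq_zero_iff_mem.mp this))
  have hker : V ⊓ LinearMap.ker φ =
      if c ≤ N then (gradedPiece 𝒜 I (N - c)).map μ else ⊥ := by
    have key : ∀ x ∈ V ⊓ LinearMap.ker φ, ∃ r : A,
        x = Ideal.Quotient.mk I (DirectSum.decompose 𝒜 (a * r) N : A) := by
      rintro x ⟨hxV, hxk⟩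
      obtain ⟨y, hy, rfl⟩ := (mem_gradedPiece 𝒜).mp hxV
      have hy' : y ∈ I ⊔ Ideal.span {a} := Ideal.Quotient.eq_zero_iff_mem.mp hxk
      obtain ⟨u, hu, v, hv, huv⟩ := Submodule.mem_sup.mp hy'
      obtain ⟨r, rfl⟩ := Ideal.mem_span_singleton.mp hv
      refine ⟨r, ?_⟩
      rw [Ideal.Quotient.eq]
      have h1 : (DirectSum.decompose 𝒜 y N : A) = y := DirectSum.decompose_of_mem_same 𝒜 hy
      have h2 : (DirectSum.decompose 𝒜 y N : A) =
          DirectSum.decompose 𝒜 u N + DirectSum.decompose 𝒜 (a * r) N := by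
        rw [← huv, DirectSum.decompose_add]; rfl
      rw [← h1, h2, add_sub_cancel_right]
      exact hI N hu
    split_ifs with hc
    · apply le_antisymm
      · intro x hx
        obtain ⟨r, rfl⟩ := key x hx
        rw [DirectSum.coe_decompose_mul_of_left_mem_of_le 𝒜 ha hc]
        exact ⟨_, (mem_gradedPiece 𝒜).mpr ⟨DirectSum.decompose 𝒜 r (N - c),
          SetLike.coe_mem _, rfl⟩, by simp [μ]⟩
      · rintro _ ⟨x, hx, rfl⟩
        obtain ⟨y, hy, rfl⟩ := (mem_gradedPiece 𝒜).mp hx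
        have e1 : μ (Ideal.Quotient.mk I y) = Ideal.Quotient.mk I (a * y) := by simp [μ]
        rw [e1]
        refine ⟨(mem_gradedPiece 𝒜).mpr ⟨_, ?_, rfl⟩, ?_⟩
        · have := SetLike.mul_mem_graded ha hy
          rwa [Nat.add_sub_cancel' hc] at this
        · exact Ideal.Quotient.eq_zero_iff_mem.mpr
            (Ideal.mem_sup_right (Ideal.mul_mem_right _ _ (Ideal.mem_span_singleton_self a)))
    · rw [eq_bot_iff]
      intro x hx
      obtain ⟨r, rfl⟩ := key x hx
      rw [DirectSum.coe_decompose_mul_of_left_mem_of_not_le 𝒜 ha hc]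
      simp
  have hrn := LinearMap.finrank_range_add_finrank_ker (φ.domRestrict V)
  have e1 : LinearMap.range (φ.domRestrict V) = V.map φ := LinearMap.range_domRestrict _ _
  have e2 : (LinearMap.ker (φ.domRestrict V)).map V.subtype = V ⊓ LinearMap.ker φ := by
    rw [LinearMap.ker_domRestrict, Submodule.map_comap_subtype]
  have e3 : Module.finrank K (LinearMap.ker (φ.domRestrict V)) =
      Module.finrank K ↥(V ⊓ LinearMap.ker φ) := by
    rw [← e2]
    exact (Submodule.equivMapOfInjective _ V.injective_subtype _).finrank_eq
  rw [e1, hmap, e3, hker] at hrn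
  rw [← hrn]
  congr 1
  split_ifs with hc
  · rw [if_pos hc]
    exact ((Submodule.equivMapOfInjective _ hμ _).finrank_eq).symm
  · rw [if_neg hc]
    exact finrank_bot K _

lemma hilbertSeries_step [∀ N, FiniteDimensional K (𝒜 N)] {I : Ideal A}
    (hI : I.IsHomogeneous 𝒜) {a : A} {c : ℕ} (ha : a ∈ 𝒜 c)
    (hreg : ∀ r, a * r ∈ I → r ∈ I) :
    hilbertSeries 𝒜 (I ⊔ Ideal.span {a}) = hilbertSeries 𝒜 I * (1 - PowerSeries.X ^ c) := by
  ext N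
  have := finrank_gradedPiece_step 𝒜 hI ha hreg N
  rw [mul_sub, mul_one, map_sub, PowerSeries.coeff_mul_X_pow']
  simp only [hilbertSeries, PowerSeries.coeff_mk]
  split_ifs at this ⊢ <;> omega

lemma hilbertSeries_initialIdeal [∀ N, FiniteDimensional K (𝒜 N)] {m : ℕ} (F : Fin m → A)
    (c : Fin m → ℕ) (hF : ∀ i, F i ∈ 𝒜 (c i)) (hreg : IsWeaklyRegularFamily F) :
    hilbertSeries 𝒜 (initialIdeal F m) =
      hilbertSeries 𝒜 ⊥ * ∏ i, (1 - PowerSeries.X ^ c i) := by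
  have key : ∀ k (hk : k ≤ m), hilbertSeries 𝒜 (initialIdeal F k) =
      hilbertSeries 𝒜 ⊥ * ∏ i : Fin k, (1 - PowerSeries.X ^ c (Fin.castLE hk i)) := by
    intro k
    induction k with
    | zero => intro _; simp [initialIdeal_zero]
    | succ k ih =>
      intro hk
      rw [initialIdeal_succ F k hk,
        hilbertSeries_step 𝒜 (isHomogeneous_initialIdeal 𝒜 F c hF k) (hF ⟨k, hk⟩)
          (hreg ⟨k, hk⟩), ih (by omega), Fin.prod_univ_castSucc, mul_assoc]
      rfl
  simpa using key m le_rfl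

/-- Distinct graded pieces of `A / I` are independent, so a finite-dimensional graded quotient
vanishes in large degrees. -/
lemma exists_forall_gradedPiece_eq_bot {I : Ideal A} (hI : I.IsHomogeneous 𝒜)
    [FiniteDimensional K (A ⧸ I)] : ∃ B, ∀ N, B ≤ N → gradedPiece 𝒜 I N = ⊥ := by
  classical
  let S := {N : ℕ | gradedPiece 𝒜 I N ≠ ⊥}
  have h1 : ∀ N : S, ∃ y ∈ 𝒜 (N : ℕ), y ∉ I := by
    rintro ⟨N, hN⟩
    obtain ⟨x, hx, hx0⟩ := Submodule.exists_mem_ne_zero_of_ne_bot hN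
    obtain ⟨y, hy, rfl⟩ := (mem_gradedPiece 𝒜).mp hx
    exact ⟨y, hy, fun h => hx0 (Ideal.Quotient.eq_zero_iff_mem.mpr h)⟩
  choose y hy hyI using h1
  have hli : LinearIndependent K (fun N : S => Ideal.Quotient.mk I (y N)) := by
    rw [linearIndependent_iff']
    intro s g hsum N hN
    by_contra hg
    have hmem : ∑ i ∈ s, g i • y i ∈ I := by
      rw [← Ideal.Quotient.eq_zero_iff_mem, map_sum, ← hsum]
      rfl
    have h2 := hI (N : ℕ) hmem
    rw [DirectSum.decompose_sum, DFinsupp.finsetSum_apply, AddSubmonoidClass.coe_finsetSum,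
      Finset.sum_eq_single N] at h2
    · rw [DirectSum.decompose_of_mem_same 𝒜 (Submodule.smul_mem _ _ (hy N))] at h2
      apply hyI N
      have := I.mul_mem_left (algebraMap K A (g N)⁻¹) h2
      rwa [← Algebra.smul_def, smul_smul, inv_mul_cancel₀ hg, one_smul] at this
    · intro i _ hi
      exact DirectSum.decompose_of_mem_ne 𝒜 (Submodule.smul_mem _ _ (hy i))
        (fun h => hi (Subtype.ext h))
    · intro h; exact absurd hN h
  have hfin : S.Finite := Set.finite_coe_iff.mp hli.finite
  obtain ⟨B, hB⟩ := hfin.bddAbove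
  refine ⟨B + 1, fun N hN => ?_⟩
  by_contra h
  have : N ≤ B := hB h
  omega

end Graded

/-! ### Krull dimension modulo a regular sequence -/

section KrullDim

variable {A : Type*} [CommRing A]

lemma ringKrullDim_quotient_sup_succ_le {I : Ideal A} {a : A}
    (hreg : ∀ r, a * r ∈ I → r ∈ I) :
    ringKrullDim (A ⧸ (I ⊔ Ideal.span {a})) + 1 ≤ ringKrullDim (A ⧸ I) := by
  have hnzd : Ideal.Quotient.mk I a ∈ nonZeroDivisors (A ⧸ I) := by
    rw [mem_nonZeroDivisors_iff_right]
    intro x hx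
    obtain ⟨r, rfl⟩ := Ideal.Quotient.mk_surjective x
    rw [← map_mul, Ideal.Quotient.eq_zero_iff_mem, mul_comm] at hx
    exact Ideal.Quotient.eq_zero_iff_mem.mpr (hreg r hx)
  refine le_trans ?_ (ringKrullDim_quotient_succ_le_of_nonZeroDivisor hnzd)
  gcongr
  let ψ : (A ⧸ I) ⧸ Ideal.span {Ideal.Quotient.mk I a} →+* A ⧸ (I ⊔ Ideal.span {a}) :=
    Ideal.Quotient.lift _ (Ideal.Quotient.factor (le_sup_left : I ≤ I ⊔ Ideal.span {a})) (by
      intro x hx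
      obtain ⟨y, rfl⟩ := Ideal.mem_span_singleton.mp hx
      rw [map_mul, Ideal.Quotient.factor_mk, Ideal.Quotient.eq_zero_iff_mem.mpr
        (Ideal.mem_sup_right (Ideal.mem_span_singleton_self a)), zero_mul])
  refine ringKrullDim_le_of_surjective ψ (fun x => ?_)
  obtain ⟨y, rfl⟩ := Ideal.Quotient.mk_surjective x
  exact ⟨Ideal.Quotient.mk _ (Ideal.Quotient.mk _ y), rfl⟩

lemma ringKrullDim_quotient_initialIdeal_add_le {m : ℕ} (F : Fin m → A)
    (hreg : IsWeaklyRegularFamily F) (k : ℕ) (hk : k ≤ m) :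
    ringKrullDim (A ⧸ initialIdeal F k) + k ≤ ringKrullDim A := by
  induction k with
  | zero => simpa using ringKrullDim_quotient_le _
  | succ k ih =>
    refine le_trans ?_ (ih (by omega))
    rw [initialIdeal_succ F k hk, Nat.cast_succ, add_comm (k : WithBot ℕ∞) 1, ← add_assoc]
    gcongr
    exact ringKrullDim_quotient_sup_succ_le (hreg ⟨k, hk⟩)

end KrullDim

/-! ### The socle degree of a weighted complete intersection -/

section Polynomial

variable {K : Type*} [Field K] {m : ℕ}

lemma finiteDimensional_quotient_of_isWeaklyRegularFamily
    (F : Fin m → MvPolynomial (Fin m) K) (hreg : IsWeaklyRegularFamily F) :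
    FiniteDimensional K (MvPolynomial (Fin m) K ⧸ initialIdeal F m) := by
  have h := ringKrullDim_quotient_initialIdeal_add_le F hreg m le_rfl
  rw [MvPolynomial.ringKrullDim_of_isNoetherianRing, ringKrullDim_eq_zero_of_field,
    Nat.card_eq_fintype_card, Fintype.card_fin] at h
  have h0 : ringKrullDim (MvPolynomial (Fin m) K ⧸ initialIdeal F m) ≤ (0 : ℕ) := by
    generalize ringKrullDim (MvPolynomial (Fin m) K ⧸ initialIdeal F m) = x at h ⊢
    induction x using WithBot.recBotCoe with
    | bot => exact bot_le
    | coe x =>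
      have h' : x + (m : ℕ∞) ≤ 0 + m := by exact_mod_cast h
      have := (ENat.add_le_add_iff_right (ENat.natCast_ne_top m)).mp h'
      exact_mod_cast this
  have := Algebra.FiniteType.of_surjective
    (Ideal.Quotient.mkₐ K (initialIdeal F m)) (Ideal.Quotient.mkₐ_surjective _ _)
  exact (Module.finite_iff_krullDimLE_zero K _).mpr (Ring.krullDimLE_iff.mpr h0)

lemma isWeaklyRegularFamily_X :
    IsWeaklyRegularFamily (X : Fin m → MvPolynomial (Fin m) K) := by
  intro k r h
  unfold initialIdeal at h ⊢
  rw [mem_ideal_span_X_image] at h ⊢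
  intro s hs
  obtain ⟨j, hj, hne⟩ := h (Finsupp.single k 1 + s) (by
    rw [mem_support_iff, coeff_X_mul]; exact mem_support_iff.mp hs)
  refine ⟨j, hj, ?_⟩
  have hjk : k ≠ j := by
    rintro rfl; simp at hj
  simpa [Finsupp.single_apply, hjk] using hne

attribute [local instance] MvPolynomial.weightedGradedAlgebra

/-- Macaulay's bound on the socle degree: the quotient of a polynomial ring in `m` variables of
weights `α i` by a regular sequence of forms of degrees `c i` vanishes in degrees above
`∑ c i - ∑ α i`. If some `c i` is zero, the quotient is zero and no bound on the degree is
needed. -/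
theorem mem_initialIdeal_of_degree_gt (α : Fin m → ℕ) (hα : ∀ i, 0 < α i)
    (F : Fin m → MvPolynomial (Fin m) K) (c : Fin m → ℕ)
    (hF : ∀ i, (F i).IsWeightedHomogeneous α (c i)) (hreg : IsWeaklyRegularFamily F)
    (N : ℕ) (hN : (∀ i, c i ≠ 0) → ∑ i, c i < N + ∑ i, α i)
    (y : MvPolynomial (Fin m) K) (hy : y.IsWeightedHomogeneous α N) :
    y ∈ initialIdeal F m := by
  classical
  let 𝒜 := weightedHomogeneousSubmodule K α
  have hfd : ∀ N, FiniteDimensional K (𝒜 N) := fun N =>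
    Module.Finite.iff_fg.mpr (weightedHomogeneousSubmodule_fg K α (fun i => (hα i).ne') N)
  have hJ := hilbertSeries_initialIdeal 𝒜 F c hF hreg
  have hX := hilbertSeries_initialIdeal 𝒜 (X : Fin m → MvPolynomial (Fin m) K) α
    (fun i => isWeightedHomogeneous_X K α i) isWeaklyRegularFamily_X
  have hXC : ∃ h : ℤ, hilbertSeries 𝒜 (initialIdeal (X : Fin m → MvPolynomial (Fin m) K) m) =
      PowerSeries.C h := by
    refine ⟨Module.finrank K (gradedPiece 𝒜 (initialIdeal X m) 0), ?_⟩
    ext M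
    rw [PowerSeries.coeff_C, hilbertSeries, PowerSeries.coeff_mk]
    split_ifs with hM
    · rw [hM]
    · have : gradedPiece 𝒜 (initialIdeal (X : Fin m → MvPolynomial (Fin m) K) m) M = ⊥ := by
        rw [eq_bot_iff]
        intro x hx
        obtain ⟨z, hz, rfl⟩ := (mem_gradedPiece 𝒜).mp hx
        refine Ideal.Quotient.eq_zero_iff_mem.mpr ?_
        unfold initialIdeal
        rw [mem_ideal_span_X_image]
        intro s hs
        have hw := hz (mem_support_iff.mp hs)
        by_contra! hcon
        have : s = 0 := by
          ext i; simpa using hcon i i.2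
        rw [this] at hw
        exact hM (by simpa using hw.symm)
      rw [this]; simp
  obtain ⟨h, hh⟩ := hXC
  have := finiteDimensional_quotient_of_isWeaklyRegularFamily F hreg
  obtain ⟨B, hB⟩ := exists_forall_gradedPiece_eq_bot 𝒜
    (isHomogeneous_initialIdeal 𝒜 F c hF m)
  let P : Polynomial ℤ := (hilbertSeries 𝒜 (initialIdeal F m)).trunc B
  have hP : (P : PowerSeries ℤ) = hilbertSeries 𝒜 (initialIdeal F m) := by
    ext M
    rw [Polynomial.coeff_coe, PowerSeries.coeff_trunc]
    split_ifs with hM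
    · rfl
    · rw [hilbertSeries, PowerSeries.coeff_mk, hB M (by omega)]; simp
  have hpoly : P * ∏ i, (1 - Polynomial.X ^ α i) =
      Polynomial.C h * ∏ i, (1 - Polynomial.X ^ c i) := by
    have hinj := Polynomial.coe_injective ℤ
    apply hinj
    have e : ∀ b : Fin m → ℕ, ((∏ i, (1 - Polynomial.X ^ b i) : Polynomial ℤ) : PowerSeries ℤ) =
        ∏ i, (1 - PowerSeries.X ^ b i) := by
      intro b
      rw [← Polynomial.coeToPowerSeries.ringHom_apply, map_prod]
      simp
    rw [Polynomial.coe_mul, Polynomial.coe_mul, e, e, Polynomial.coe_C, hP, hJ, ← hh, hX]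
    ring
  have hcoeff : P.coeff N = 0 := by
    by_cases hc : ∀ i, c i ≠ 0
    · by_cases hP0 : P = 0
      · simp [hP0]
      apply Polynomial.coeff_eq_zero_of_natDegree_lt
      have hne : ∀ i, (1 - Polynomial.X ^ α i : Polynomial ℤ) ≠ 0 := by
        intro i h0
        have := congrArg (fun r => Polynomial.coeff r 0) h0
        simp [Polynomial.coeff_X_pow, (hα i).ne] at this
      have hdeg : ∀ i, (1 - Polynomial.X ^ α i : Polynomial ℤ).natDegree = α i := by
        intro i
        rw [← Polynomial.natDegree_neg, neg_sub]
        exact Polynomial.natDegree_X_pow_sub_C (r := (1 : ℤ))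
      have h1 : (P * ∏ i, (1 - Polynomial.X ^ α i)).natDegree = P.natDegree + ∑ i, α i := by
        rw [Polynomial.natDegree_mul hP0 (Finset.prod_ne_zero_iff.mpr fun i _ => hne i),
          Polynomial.natDegree_prod _ _ fun i _ => hne i]
        simp [hdeg]
      have h2 : (Polynomial.C h * ∏ i, (1 - Polynomial.X ^ c i)).natDegree ≤ ∑ i, c i := by
        refine (Polynomial.natDegree_C_mul_le _ _).trans ?_
        refine (Polynomial.natDegree_prod_le _ _).trans (Finset.sum_le_sum fun i _ => ?_)
        refine (Polynomial.natDegree_sub_le _ _).trans ?_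
        simp
      rw [hpoly] at h1
      have := hN hc
      omega
    · push Not at hc
      -- A factor `1 - T ^ 0` makes the product in `hJ` zero.
      obtain ⟨i, hi⟩ := hc
      have : (hilbertSeries 𝒜 (initialIdeal F m)) = 0 := by
        rw [hJ, Finset.prod_eq_zero (Finset.mem_univ i) (by simp [hi]), mul_zero]
      rw [← Polynomial.coeff_coe, hP, this]; simp
  have hfr : Module.finrank K (gradedPiece 𝒜 (initialIdeal F m) N) = 0 := by
    rw [← Polynomial.coeff_coe, hP, hilbertSeries, PowerSeries.coeff_mk] at hcoeff
    exact_mod_cast hcoeff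
  have hbot : gradedPiece 𝒜 (initialIdeal F m) N = ⊥ := Submodule.finrank_eq_zero.mp hfr
  have hmem : Ideal.Quotient.mk (initialIdeal F m) y ∈ gradedPiece 𝒜 (initialIdeal F m) N :=
    (mem_gradedPiece 𝒜).mpr ⟨y, hy, rfl⟩
  rw [hbot, Submodule.mem_bot] at hmem
  exact Ideal.Quotient.eq_zero_iff_mem.mp hmem

end Polynomial

/-! ### The Jacobian ideal and Frobenius powers -/

section Frobenius

variable {K : Type*} [Field K] {n : ℕ}

lemma isWeaklyRegularFamily_pderiv {f : MvPolynomial (Fin (n + 1)) K}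
    (hsing : HasIsolatedSingularity f) :
    IsWeaklyRegularFamily fun i => pderiv i f := by
  intro k r hr
  set F : Fin (n + 1) → MvPolynomial (Fin (n + 1)) K := fun i => pderiv i f with hF
  have h := hsing.toIsWeaklyRegular.regular_mod_prev k (by simp; omega)
  have hI : (Ideal.ofList (((List.finRange (n + 1)).map F).take k) • ⊤ :
      Ideal (MvPolynomial (Fin (n + 1)) K)) = initialIdeal F k := by
    rw [smul_eq_mul, Ideal.mul_top, Ideal.ofList, initialIdeal]
    congr 1
    ext x
    simp only [Set.mem_ofPred_eq, Set.mem_image, List.mem_take_iff_getElem, List.length_map,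
      List.length_finRange, List.getElem_map, List.getElem_finRange]
    constructor
    · rintro ⟨j, hj, rfl⟩
      exact ⟨⟨j, by omega⟩, by simp; omega, rfl⟩
    · rintro ⟨j, hj, rfl⟩
      exact ⟨j, by omega, rfl⟩
  rw [hI] at h
  have hk : ((List.finRange (n + 1)).map F)[(k : ℕ)]'(by simp; omega) = F k := by simp
  change IsSMulRegular _ (((List.finRange (n + 1)).map F)[(k : ℕ)]'(by simp; omega)) at h
  rw [hk] at h
  have h0 : F k • (Ideal.Quotient.mk (initialIdeal F k) r) = F k • 0 := by
    rw [smul_zero, ← Ideal.Quotient.eq_zero_iff_mem.mpr hr, map_mul]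
    rfl
  exact Ideal.Quotient.eq_zero_iff_mem.mp (h h0)

/-- Natural-number truncation is harmless here: when `d < α i` the derivative is zero, which is
homogeneous of every degree. -/
lemma isWeightedHomogeneous_pderiv_sub {α : Fin (n + 1) → ℕ} {d : ℕ}
    {f : MvPolynomial (Fin (n + 1)) K} (hf : f.IsWeightedHomogeneous α d) (i : Fin (n + 1)) :
    (pderiv i f).IsWeightedHomogeneous α (d - α i) := by
  by_cases h : α i ≤ d
  · exact hf.pderiv (Nat.sub_add_cancel h)
  · rw [pderiv_eq_zero_of_notMem_vars]
    · exact isWeightedHomogeneous_zero K α _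
    · intro hi
      obtain ⟨s, hs, his⟩ := (mem_vars_iff_mem_support i).mp hi
      have hw := hf (mem_support_iff.mp hs)
      have := Finsupp.le_weight_of_ne_zero' α (Finsupp.mem_support_iff.mp his)
      omega

lemma mem_frobeniusPower_iff {q : ℕ} {a : MvPolynomial (Fin (n + 1)) K} :
    a ∈ frobeniusPower K n q ↔ ∀ s ∈ a.support, ∃ i, q ≤ s i := by
  have := @mem_ideal_span_monomial_image (Fin (n + 1)) K _ a
    (Set.range fun i => Finsupp.single i q)
  rw [← Set.range_comp] at this
  have e : frobeniusPower K n q = Ideal.span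
      (Set.range ((fun s => monomial s (1 : K)) ∘ fun i => Finsupp.single i q)) := by
    unfold frobeniusPower
    congr 2
    ext1 i
    simp [X_pow_eq_monomial]
  rw [e, this]
  simp

lemma pderiv_mem_frobeniusPower {q : ℕ} (hq : (q : K) = 0) (i : Fin (n + 1))
    {a : MvPolynomial (Fin (n + 1)) K} (ha : a ∈ frobeniusPower K n q) :
    pderiv i a ∈ frobeniusPower K n q := by
  unfold frobeniusPower at ha
  induction ha using Submodule.span_induction with
  | mem x hx =>
    obtain ⟨j, rfl⟩ := hx
    have : (q : MvPolynomial (Fin (n + 1)) K) = 0 := by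
      rw [← map_natCast (C : K →+* _), hq, map_zero]
    simp [Derivation.leibniz_pow, this]
  | zero => simp
  | add x y _ _ hx hy => rw [map_add]; exact Ideal.add_mem _ hx hy
  | smul r x hxI hx =>
    rw [smul_eq_mul, Derivation.leibniz]
    exact Ideal.add_mem _ (Ideal.mul_mem_left _ _ hx)
      (by rw [smul_eq_mul, mul_comm]; exact Ideal.mul_mem_left _ _ hxI)

/-- `R / m^{[q]}` is Gorenstein with socle monomial `∏ x_i^{q-1}`: a form of degree `D` lies in
`m^{[q]}` as soon as all its multiples by monomials of the complementary degree do. -/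
lemma mem_frobeniusPower_of_forall_monomial {q : ℕ} (hq : 0 < q) (α : Fin (n + 1) → ℕ) {D : ℕ}
    {a : MvPolynomial (Fin (n + 1)) K} (ha : a.IsWeightedHomogeneous α D)
    (h : ∀ u : Fin (n + 1) →₀ ℕ, Finsupp.weight α u + D = (∑ i, α i) * (q - 1) →
      a * monomial u 1 ∈ frobeniusPower K n q) :
    a ∈ frobeniusPower K n q := by
  rw [mem_frobeniusPower_iff]
  intro s hs
  by_contra! hlt
  let v : Fin (n + 1) →₀ ℕ := Finsupp.equivFunOnFinite.symm fun _ => q - 1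
  have hsv : s ≤ v := fun i => by
    have := hlt i
    simp [v]; omega
  have hv : Finsupp.weight α v = (∑ i, α i) * (q - 1) := by
    rw [Finsupp.weight_apply, Finsupp.sum_fintype _ _ (by simp)]
    simp [v, Finset.sum_mul, mul_comm]
  have hsum : s + (v - s) = v := add_tsub_cancel_of_le hsv
  have hmem := h (v - s) (by
    rw [← hv, ← ha (mem_support_iff.mp hs), ← map_add, tsub_add_cancel_of_le hsv])
  rw [mem_frobeniusPower_iff] at hmem
  obtain ⟨i, hi⟩ := hmem v (by
    have e := coeff_mul_monomial s (v - s) (1 : K) a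
    rw [hsum, mul_one] at e
    rw [mem_support_iff, e]
    exact mem_support_iff.mp hs)
  simp [v] at hi
  omega

/-- One power of `f` can be removed: differentiate, then use that the Jacobian ideal contains all
forms of the relevant complementary degrees. -/
lemma mem_frobeniusPower_of_pow_succ {p : ℕ} [Fact p.Prime] [CharP K p]
    (α : Fin (n + 1) → ℕ) (hα : ∀ i, 0 < α i) {d : ℕ} {f : MvPolynomial (Fin (n + 1)) K}
    (hf : f.IsWeightedHomogeneous α d) (hsing : HasIsolatedSingularity f)
    {q : ℕ} (hq0 : 0 < q) (hpq : p ∣ q) {k : ℕ} (hk : k + 1 < p)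
    {g : MvPolynomial (Fin (n + 1)) K} {dg : ℕ} (hg : g.IsWeightedHomogeneous α dg)
    (hdeg : k * d + p * dg + (n + 1) * d < (∑ i, α i) * q + ∑ i, α i)
    (hmem : f ^ (k + 1) * g ^ p ∈ frobeniusPower K n q) :
    f ^ k * g ^ p ∈ frobeniusPower K n q := by
  have hqK : (q : K) = 0 := (CharP.cast_eq_zero_iff K p q).mpr hpq
  have hpK : (p : MvPolynomial (Fin (n + 1)) K) = 0 := by
    rw [← map_natCast (C : K →+* _), CharP.cast_eq_zero, map_zero]
  have hkK : ((k + 1 : ℕ) : K) ≠ 0 := by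
    rw [Ne, CharP.cast_eq_zero_iff K p]
    exact fun h => absurd (Nat.le_of_dvd (by omega) h) (by omega)
  have hderiv : ∀ i, (f ^ k * g ^ p) * pderiv i f ∈ frobeniusPower K n q := by
    intro i
    have h1 := pderiv_mem_frobeniusPower hqK i hmem
    have h2 : pderiv i (f ^ (k + 1) * g ^ p) =
        C ((k + 1 : ℕ) : K) * ((f ^ k * g ^ p) * pderiv i f) := by
      simp only [Derivation.leibniz, Derivation.leibniz_pow, smul_eq_mul, nsmul_eq_mul, hpK,
        map_natCast, Nat.add_sub_cancel]
      ring
    rw [h2] at h1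
    have h3 := Ideal.mul_mem_left _ (C ((k + 1 : ℕ) : K)⁻¹) h1
    rwa [← mul_assoc, ← C_mul, inv_mul_cancel₀ hkK, C_1, one_mul] at h3
  have hJ : ∀ y ∈ initialIdeal (fun i => pderiv i f) (n + 1),
      (f ^ k * g ^ p) * y ∈ frobeniusPower K n q := by
    intro y hy
    unfold initialIdeal at hy
    induction hy using Submodule.span_induction with
    | mem x hx => obtain ⟨i, -, rfl⟩ := hx; exact hderiv i
    | zero => simp
    | add x y _ _ hx hy => rw [mul_add]; exact Ideal.add_mem _ hx hy
    | smul r x _ hx => rw [smul_eq_mul, mul_left_comm]; exact Ideal.mul_mem_left _ _ hx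
  have hhom : (f ^ k * g ^ p).IsWeightedHomogeneous α (k * d + p * dg) := by
    simpa using (hf.pow k).mul (hg.pow p)
  refine mem_frobeniusPower_of_forall_monomial hq0 α hhom fun u hu => hJ _ ?_
  refine mem_initialIdeal_of_degree_gt α hα _ (fun i => d - α i)
    (isWeightedHomogeneous_pderiv_sub hf) (isWeaklyRegularFamily_pderiv hsing)
    (Finsupp.weight α u) (fun hc => ?_) _ (isWeightedHomogeneous_monomial α u 1 rfl)
  have h1 : ∑ i, (d - α i) + ∑ i, α i = (n + 1) * d := by
    rw [← Finset.sum_add_distrib, Finset.sum_congr rfl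
      (fun i _ => Nat.sub_add_cancel (by have := hc i; omega : α i ≤ d))]
    simp
  have h2 : (∑ i, α i) * (q - 1) + ∑ i, α i = (∑ i, α i) * q := by
    rw [← Nat.mul_succ, Nat.succ_eq_add_one, Nat.sub_add_cancel hq0]
  omega

end Frobenius

end QuasiHom

/-- let `f` be quasi-homogeneous of degree `d` and type `α` with an
isolated singularity, `1 ≤ t ≤ p`, `p ≥ nd − w − td + 1`, `q = p^e` with `e ≥ 1`, and
let `g` be quasi-homogeneous with `p·deg(g) ≤ wq − pd − p`. If `f^{p−t}·g^p ∈ m^{[q]}`,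
then `g^p ∈ m^{[q]}`. -/
theorem statement19 {K : Type*} [Field K] {p : ℕ} [Fact p.Prime] [CharP K p] {n : ℕ}
    (α : Fin (n + 1) → ℕ) (hα : ∀ i, 0 < α i) (d w : ℕ) (hw : w = ∑ i, α i)
    (f : MvPolynomial (Fin (n + 1)) K)
    (hf : f.IsWeightedHomogeneous α d)
    (hsing : HasIsolatedSingularity f)
    (t : ℕ) (ht1 : 1 ≤ t) (ht2 : t ≤ p)
    (hp : (n : ℤ) * d - w - t * d + 1 ≤ (p : ℤ))
    (e : ℕ) (he : 1 ≤ e) (q : ℕ) (hq : q = p ^ e)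
    (g : MvPolynomial (Fin (n + 1)) K) (dg : ℕ)
    (hg : g.IsWeightedHomogeneous α dg)
    (hdg : (p : ℤ) * dg ≤ (w : ℤ) * q - p * d - p)
    (hmem : f ^ (p - t) * g ^ p ∈ frobeniusPower K n q) :
    g ^ p ∈ frobeniusPower K n q := by
  subst hw hq
  have hp0 : 0 < p := (Fact.out : p.Prime).pos
  have hpq : p ∣ p ^ e := dvd_pow_self p (by omega)
  have key : ∀ k, k + t ≤ p → f ^ k * g ^ p ∈ frobeniusPower K n (p ^ e) →
      g ^ p ∈ frobeniusPower K n (p ^ e) := by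
    intro k
    induction k with
    | zero => intro _ h; simpa using h
    | succ k ih =>
      intro hk h
      refine ih (by omega) (QuasiHom.mem_frobeniusPower_of_pow_succ α hα hf hsing
        (pow_pos hp0 e) hpq (by omega) hg ?_ h)
      have hkd : ((k : ℤ) + 1 + t) * d ≤ p * d := by
        apply mul_le_mul_of_nonneg_right _ (by positivity)
        exact_mod_cast hk
      zify at hdg hp ⊢
      nlinarith
  exact key (p - t) (by omega) hmem
end
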